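/- Let σ > 0 and N ≥ 2 an integer, assume Π⁺ is continuously differentiable on (m, M) and that the limits Ψ⁺ₓ(M) = lim_{x→M⁻} (d/dx)Ψ⁺(x) and Ψ⁻ₓ(m) = lim_{x→m⁺} (d/dx)Ψ⁻(x) exist. Let F : ℝ → (m, M) be a solution of equation (E) and define the implementation shortfall IS(x) = N·∫₀¹ F(x·y)·y^{N−1} dy. Then lim_{x→∞} (M − IS(x))/(M − F(x)) = N/(N + ρ⁺) and lim_{x→−∞} (IS(x) − m)/(F(x) − m) = N/(N + ρ⁻), where ρ⁺ = (Ψ⁺ₓ(M) − 1)/(1 − Ψ⁺ₓ(M)/N) and ρ⁻ = (Ψ⁻ₓ(m) − 1)/(1 − Ψ⁻ₓ(m)/N). -/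

import Mathlib

open MeasureTheory Filter Set

/-- Centered Gaussian density with variance `σ²`. -/
noncomputable def gq (σ z : ℝ) : ℝ :=
  Real.exp (-(z ^ 2) / (2 * σ ^ 2)) / (σ * Real.sqrt (2 * Real.pi))

/-- The averaged kernel `q̄(σ,x,z)`. -/
noncomputable def gqbar (σ x z : ℝ) : ℝ :=
  if x = 0 then gq σ z else (1 / x) * ∫ y in (0:ℝ)..x, gq σ (y - z)

/-- `Φ⁺(y) = E[V·1_{V>y}]`. -/
noncomputable def Phip {Ω : Type*} [MeasurableSpace Ω] (P : Measure Ω) (V : Ω → ℝ) (y : ℝ) : ℝ :=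
  ∫ ω in {ω | V ω > y}, V ω ∂P

/-- `Π⁺(y) = P(V > y)`. -/
noncomputable def Pip {Ω : Type*} [MeasurableSpace Ω] (P : Measure Ω) (V : Ω → ℝ) (y : ℝ) : ℝ :=
  (P {ω | V ω > y}).toReal

/-- `Φ⁻(y) = E[V·1_{V≤y}]`. -/
noncomputable def Phim {Ω : Type*} [MeasurableSpace Ω] (P : Measure Ω) (V : Ω → ℝ) (y : ℝ) : ℝ :=
  ∫ ω in {ω | V ω ≤ y}, V ω ∂P

/-- `Π⁻(y) = P(V ≤ y)`. -/
noncomputable def Pim {Ω : Type*} [MeasurableSpace Ω] (P : Measure Ω) (V : Ω → ℝ) (y : ℝ) : ℝ :=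
  (P {ω | V ω ≤ y}).toReal

/-- `Ψ⁺ = Φ⁺/Π⁺`. -/
noncomputable def Psip {Ω : Type*} [MeasurableSpace Ω] (P : Measure Ω) (V : Ω → ℝ) (y : ℝ) : ℝ :=
  Phip P V y / Pip P V y

/-- `Ψ⁻ = Φ⁻/Π⁻`. -/
noncomputable def Psim {Ω : Type*} [MeasurableSpace Ω] (P : Measure Ω) (V : Ω → ℝ) (y : ℝ) : ℝ :=
  Phim P V y / Pim P V y

/-- `φ⁺_g`. -/
noncomputable def phip {Ω : Type*} [MeasurableSpace Ω] (P : Measure Ω) (V : Ω → ℝ)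
    (σ : ℝ) (g : ℝ → ℝ) (x : ℝ) : ℝ :=
  (∫ z, Phip P V (g z) * gq σ (x - z)) / (∫ z, Pip P V (g z) * gq σ (x - z))

/-- `φ⁻_g`. -/
noncomputable def phim {Ω : Type*} [MeasurableSpace Ω] (P : Measure Ω) (V : Ω → ℝ)
    (σ : ℝ) (g : ℝ → ℝ) (x : ℝ) : ℝ :=
  (∫ z, Phim P V (g z) * gq σ (x - z)) / (∫ z, Pim P V (g z) * gq σ (x - z))

/-- `φ_g`, equal to `φ⁺_g` on `[0,∞)` and `φ⁻_g` on `(−∞,0)`. -/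
noncomputable def phig {Ω : Type*} [MeasurableSpace Ω] (P : Measure Ω) (V : Ω → ℝ)
    (σ : ℝ) (g : ℝ → ℝ) (x : ℝ) : ℝ :=
  if 0 ≤ x then phip P V σ g x else phim P V σ g x

/-- The interior of the support of the law of `V` is `(m, M)` (with `V` bounded). -/
def SuppIoo {Ω : Type*} [MeasurableSpace Ω] (P : Measure Ω) (V : Ω → ℝ) (m M : ℝ) : Prop :=
  m < M ∧ (∀ᵐ ω ∂P, V ω ∈ Set.Icc m M) ∧
    (∀ y < M, 0 < P {ω | V ω > y}) ∧ (∀ y, m < y → 0 < P {ω | V ω ≤ y})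

/-- Equation (E). -/
def SolvesE {Ω : Type*} [MeasurableSpace Ω] (P : Measure Ω) (V : Ω → ℝ)
    (σ : ℝ) (N : ℕ) (F : ℝ → ℝ) : Prop :=
  ∀ x : ℝ, F x =
    ∫ z, ((1 / (N:ℝ)) * gq σ (x - z) + (((N:ℝ) - 1) / (N:ℝ)) * gqbar σ x z) * phig P V σ F z

noncomputable def gA (γ : Measure ℝ) (f : ℝ → ℝ) (x : ℝ) : ℝ := ∫ u, f (x + u) ∂γ

section gAlemmas
variable {γ : Measure ℝ} [IsProbabilityMeasure γ]

lemma gA_int {f : ℝ → ℝ} (hf : Measurable f) {C : ℝ} (hC : ∀ x, |f x| ≤ C) (x : ℝ) :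
    Integrable (fun u => f (x + u)) γ :=
  Integrable.of_bound (hf.comp (measurable_const_add x)).aestronglyMeasurable C
    (Eventually.of_forall fun u => hC _)

lemma gA_mono {f g : ℝ → ℝ} (hf : Measurable f) (hg : Measurable g) {C C' : ℝ}
    (hC : ∀ x, |f x| ≤ C) (hC' : ∀ x, |g x| ≤ C') (h : ∀ x, f x ≤ g x) (x : ℝ) :
    gA γ f x ≤ gA γ g x :=
  integral_mono (gA_int hf hC x) (gA_int hg hC' x) (fun u => h _)

lemma gA_const (c x : ℝ) : gA γ (fun _ => c) x = c := by simp [gA]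

lemma gA_meas {f : ℝ → ℝ} (hf : Measurable f) : Measurable (gA γ f) := by
  have : StronglyMeasurable (fun p : ℝ × ℝ => f (p.1 + p.2)) :=
    (hf.comp (measurable_fst.add measurable_snd)).stronglyMeasurable
  exact (this.integral_prod_right).measurable

lemma gA_abs {f : ℝ → ℝ} {C : ℝ} (hC : ∀ x, |f x| ≤ C) (x : ℝ) :
    |gA γ f x| ≤ C := by
  have := norm_integral_le_of_norm_le_const (μ := γ) (f := fun u => f (x+u)) (C := C)
    (Eventually.of_forall fun u => hC _)
  simpa [gA] using this

lemma gA_anti {f : ℝ → ℝ} (hf : Antitone f) {C : ℝ} (hC : ∀ x, |f x| ≤ C) :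
    Antitone (gA γ f) := fun x y hxy =>
  integral_mono (gA_int hf.measurable hC y) (gA_int hf.measurable hC x)
    (fun u => hf (by linarith))

lemma gA_fkg {f g : ℝ → ℝ} (hf : Measurable f) (hg : Measurable g) {C C' : ℝ}
    (hC : ∀ x, |f x| ≤ C) (hC' : ∀ x, |g x| ≤ C')
    (h : ∀ s t, 0 ≤ (f s - f t) * (g s - g t)) (x : ℝ) :
    gA γ f x * gA γ g x ≤ gA γ (fun y => f y * g y) x := by
  have i1 := gA_int (γ := γ) hf hC x
  have i2 := gA_int (γ := γ) hg hC' x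
  have i3 : Integrable (fun u => f (x+u) * g (x+u)) γ :=
    gA_int (γ := γ) (f := fun y => f y * g y) (hf.mul hg) (C := C * C') (fun y => by
      rw [abs_mul]; exact mul_le_mul (hC y) (hC' y) (abs_nonneg _) ((abs_nonneg _).trans (hC y))) x
  have key : ∀ s, 0 ≤ f (x+s) * g (x+s) - f (x+s) * gA γ g x - g (x+s) * gA γ f x
      + gA γ (fun y => f y * g y) x := by
    intro s
    have h1 : 0 ≤ ∫ t, (f (x+s) - f (x+t)) * (g (x+s) - g (x+t)) ∂γ :=
      integral_nonneg fun t => h _ _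
    have h2 : ∫ t, (f (x+s) - f (x+t)) * (g (x+s) - g (x+t)) ∂γ =
      ∫ t, (f (x+s) * g (x+s) - f (x+s) * g (x+t) - g (x+s) * f (x+t)
        + f (x+t) * g (x+t)) ∂γ := by
      congr 1; ext t; ring
    rw [h2, integral_add, integral_sub, integral_sub] at h1
    · simp only [integral_const, probReal_univ, one_smul, integral_const_mul] at h1
      exact h1
    all_goals first
      | exact i3
      | exact integrable_const _
      | exact i2.const_mul _
      | exact i1.const_mul _
      | exact (integrable_const _).sub (i2.const_mul _)
      | exact ((integrable_const _).sub (i2.const_mul _)).sub (i1.const_mul _)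
  have h1 : 0 ≤ ∫ s, (f (x+s) * g (x+s) - f (x+s) * gA γ g x - g (x+s) * gA γ f x
      + gA γ (fun y => f y * g y) x) ∂γ := integral_nonneg key
  rw [integral_add, integral_sub, integral_sub, integral_mul_const, integral_mul_const] at h1
  · have e : gA γ (fun y => f y * g y) x = ∫ s, f (x+s) * g (x+s) ∂γ := rfl
    have e1 : gA γ f x = ∫ s, f (x+s) ∂γ := rfl
    have e2 : gA γ g x = ∫ s, g (x+s) ∂γ := rfl
    simp only [integral_const, probReal_univ, one_smul, ← e, ← e1, ← e2] at h1
    nlinarith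
  all_goals first
      | exact i3
      | exact integrable_const _
      | exact i2.mul_const _
      | exact i1.mul_const _
      | exact (i3.sub (i1.mul_const _))
      | exact ((i3.sub (i1.mul_const _)).sub (i2.mul_const _))
end gAlemmas

structure Core (γ : Measure ℝ) (N : ℕ) (b L e0 : ℝ) (w ψ w' ψ' D κ : ℝ → ℝ) : Prop where
  hN : 2 ≤ N
  hb : 0 < b
  he0 : 0 < e0
  heb : e0 < b
  gexp : ∀ l : ℝ, Integrable (fun u => Real.exp (l * |u|)) γ
  gpos : ∀ s : Set ℝ, IsOpen s → s.Nonempty → 0 < γ s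
  wm : Measurable w
  ψm : Measurable ψ
  wpos : ∀ d ∈ Ioo 0 b, 0 < w d
  wle : ∀ d ∈ Ioo 0 b, w d ≤ 1
  wmono : MonotoneOn w (Ioo 0 b)
  ψpos : ∀ d ∈ Ioo 0 b, 0 ≤ ψ d
  ψlt : ∀ d ∈ Ioo 0 b, ψ d < d
  ψe : ∀ d ∈ Ioo 0 b, ψ d ≤ e0
  ψmono : MonotoneOn ψ (Ioo 0 b)
  dw : ∀ d ∈ Ioo 0 b, HasDerivAt w (w' d) d
  dψ : ∀ d ∈ Ioo 0 b, HasDerivAt ψ (ψ' d) d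
  rel : ∀ d ∈ Ioo 0 b, ψ' d * w d = w' d * (d - ψ d)
  lim : Tendsto ψ' (nhdsWithin 0 (Ioi 0)) (nhds L)
  Dm : Measurable D
  Dmem : ∀ x, D x ∈ Ioo 0 b
  κm : Measurable κ
  κ0 : ∀ z, 0 ≤ κ z
  κb : ∀ z, κ z ≤ b
  κeq : ∀ z, 0 ≤ z → κ z * gA γ (fun y => w (D y)) z = gA γ (fun y => ψ (D y) * w (D y)) z
  κneg : ∀ z < 0, e0 ≤ κ z
  kc : Continuous (gA γ κ)
  eq : ∀ x, x ≠ 0 → D x = (1 / (N:ℝ)) * gA γ κ x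
    + (((N:ℝ) - 1) / (N:ℝ)) * ((1 / x) * ∫ y in (0:ℝ)..x, gA γ κ y)

namespace Core
variable {γ : Measure ℝ} [IsProbabilityMeasure γ] {N : ℕ} {b L e0 : ℝ} {w ψ w' ψ' D κ : ℝ → ℝ}

lemma κabs (c : Core γ N b L e0 w ψ w' ψ' D κ) (z : ℝ) : |κ z| ≤ b := by
  rw [abs_of_nonneg (c.κ0 z)]; exact c.κb z

lemma wD_abs (c : Core γ N b L e0 w ψ w' ψ' D κ) (z : ℝ) : |w (D z)| ≤ 1 := by
  rw [abs_of_pos (c.wpos _ (c.Dmem z))]; exact c.wle _ (c.Dmem z)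

lemma ψD_abs (c : Core γ N b L e0 w ψ w' ψ' D κ) (z : ℝ) : |ψ (D z)| ≤ b := by
  rw [abs_of_nonneg (c.ψpos _ (c.Dmem z))]
  exact ((c.ψlt _ (c.Dmem z)).trans (c.Dmem z).2).le

lemma ψDm (c : Core γ N b L e0 w ψ w' ψ' D κ) : Measurable (fun z => ψ (D z)) := c.ψm.comp c.Dm
lemma wDm (c : Core γ N b L e0 w ψ w' ψ' D κ) : Measurable (fun z => w (D z)) := c.wm.comp c.Dm

lemma AwD_pos (c : Core γ N b L e0 w ψ w' ψ' D κ) (z : ℝ) : 0 < gA γ (fun y => w (D y)) z := by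
  have := gA_int (γ := γ) c.wDm c.wD_abs z
  unfold gA
  rw [integral_pos_iff_support_of_nonneg (fun u => (c.wpos _ (c.Dmem _)).le) this]
  have : Function.support (fun u => w (D (z + u))) = univ := by
    ext u; simpa using (c.wpos _ (c.Dmem _)).ne'
  rw [this]; simp

lemma k_nonneg (c : Core γ N b L e0 w ψ w' ψ' D κ) (x : ℝ) : 0 ≤ gA γ κ x :=
  integral_nonneg fun u => c.κ0 _

lemma k_le (c : Core γ N b L e0 w ψ w' ψ' D κ) (x : ℝ) : gA γ κ x ≤ b :=
  (le_abs_self _).trans (gA_abs c.κabs x)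

lemma k_lower (c : Core γ N b L e0 w ψ w' ψ' D κ) (X : ℝ) :
    ∃ δ > 0, ∀ x ≤ X, δ ≤ gA γ κ x := by
  refine ⟨e0 * γ.real (Iio (-X)), ?_, ?_⟩
  · refine mul_pos c.he0 ?_
    exact ENNReal.toReal_pos (c.gpos _ isOpen_Iio ⟨-X-1, by simp⟩).ne' (measure_ne_top _ _)
  · intro x hx
    have h1 : ∫ u, (Iio (-X)).indicator (fun _ => e0) u ∂γ = e0 * γ.real (Iio (-X)) := by
      rw [integral_indicator measurableSet_Iio]; simp [mul_comm]
    rw [← h1]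
    refine integral_mono ((integrable_const _).indicator measurableSet_Iio)
      (gA_int c.κm c.κabs x) ?_
    intro u
    by_cases hu : u ∈ Iio (-X)
    · rw [indicator_of_mem hu]
      exact c.κneg _ (by have := mem_Iio.1 hu; linarith)
    · rw [indicator_of_notMem hu]; exact c.κ0 _

lemma k_pos (c : Core γ N b L e0 w ψ w' ψ' D κ) (x : ℝ) : 0 < gA γ κ x := by
  obtain ⟨δ, h, h'⟩ := c.k_lower x
  exact h.trans_le (h' x le_rfl)

lemma Npos (c : Core γ N b L e0 w ψ w' ψ' D κ) : (2:ℝ) ≤ N := by exact_mod_cast c.hN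

lemma avg_nonneg {f : ℝ → ℝ} (hf : ∀ x, 0 ≤ f x) (x : ℝ) :
    0 ≤ (1 / x) * ∫ y in (0:ℝ)..x, f y := by
  rcases le_total 0 x with h | h
  · exact mul_nonneg (by positivity) (intervalIntegral.integral_nonneg h fun u _ => hf u)
  · rw [intervalIntegral.integral_symm]
    have := intervalIntegral.integral_nonneg h (f := f) (μ := volume) fun u _ => hf u
    have h2 : 1 / x ≤ 0 := by simpa using h
    nlinarith

lemma D_lower (c : Core γ N b L e0 w ψ w' ψ' D κ) (X : ℝ) :
    ∃ δ > 0, ∀ x ≤ X, δ ≤ D x := by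
  obtain ⟨δ, h, h'⟩ := c.k_lower X
  have hN := c.Npos
  refine ⟨min (D 0) (δ / N), lt_min (c.Dmem 0).1 (by positivity), fun x hx => ?_⟩
  by_cases h0 : x = 0
  · subst h0; exact min_le_left _ _
  · refine (min_le_right _ _).trans ?_
    rw [c.eq x h0]
    have h1 := avg_nonneg c.k_nonneg x
    have h2 : 0 ≤ ((N:ℝ) - 1) / N := div_nonneg (by linarith) (by linarith)
    have h3 := mul_nonneg h2 h1
    have h4 : δ / N ≤ (1 / (N:ℝ)) * gA γ κ x := by
      rw [div_eq_inv_mul, one_div]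
      exact mul_le_mul_of_nonneg_left (h' x hx) (by positivity)
    linarith

lemma kint (c : Core γ N b L e0 w ψ w' ψ' D κ) (x y : ℝ) :
    IntervalIntegrable (gA γ κ) volume x y := c.kc.intervalIntegrable _ _

/-- `x G(x)` is bounded below. -/
lemma H_lower (c : Core γ N b L e0 w ψ w' ψ' D κ) :
    ∃ c1 > 0, ∀ x ≥ 1, c1 ≤ ∫ y in (0:ℝ)..x, gA γ κ y := by
  refine ⟨∫ y in (0:ℝ)..1, gA γ κ y, ?_, ?_⟩
  · exact intervalIntegral.intervalIntegral_pos_of_pos (c.kint _ _) c.k_pos one_pos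
  · intro x hx
    rw [← intervalIntegral.integral_add_adjacent_intervals (c.kint 0 1) (c.kint 1 x)]
    have := intervalIntegral.integral_nonneg hx (f := gA γ κ) (μ := volume)
      fun u _ => c.k_nonneg u
    linarith

lemma D_lower' (c : Core γ N b L e0 w ψ w' ψ' D κ) :
    ∃ c1 > 0, ∀ x ≥ 1, c1 / x ≤ D x := by
  obtain ⟨c1, h, h'⟩ := c.H_lower
  have hN := c.Npos
  refine ⟨c1 / 2, by positivity, fun x hx => ?_⟩
  rw [c.eq x (by positivity)]
  have h1 := c.k_nonneg x
  have h2 : (1:ℝ)/2 ≤ ((N:ℝ) - 1) / N := by rw [div_le_div_iff₀] <;> linarith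
  have h3 : c1 / x ≤ (1 / x) * ∫ y in (0:ℝ)..x, gA γ κ y := by
    rw [div_eq_inv_mul, one_div]
    exact mul_le_mul_of_nonneg_left (h' x hx) (by positivity)
  have h4 : 0 ≤ c1 / x := by positivity
  have h5 : 0 ≤ (1 / (N:ℝ)) * gA γ κ x := by positivity
  have h6 := mul_le_mul h2 h3 h4 (by linarith)
  calc c1 / 2 / x = 1/2 * (c1 / x) := by ring
    _ ≤ _ := by linarith

lemma fkg (c : Core γ N b L e0 w ψ w' ψ' D κ) (z : ℝ) : gA γ (fun y => ψ (D y)) z ≤ κ z := by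
  rcases lt_or_ge z 0 with hz | hz
  · refine le_trans ?_ (c.κneg z hz)
    have := gA_mono (γ := γ) c.ψDm measurable_const c.ψD_abs (fun _ => le_refl |e0|)
      (fun x => c.ψe _ (c.Dmem x)) z
    simpa [gA_const] using this
  · have h1 := gA_fkg (γ := γ) c.ψDm c.wDm c.ψD_abs c.wD_abs (fun s t => by
      rcases le_total (D s) (D t) with h | h
      · exact mul_nonneg_of_nonpos_of_nonpos
          (sub_nonpos.2 (c.ψmono (c.Dmem _) (c.Dmem _) h))
          (sub_nonpos.2 (c.wmono (c.Dmem _) (c.Dmem _) h))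
      · exact mul_nonneg (sub_nonneg.2 (c.ψmono (c.Dmem _) (c.Dmem _) h))
          (sub_nonneg.2 (c.wmono (c.Dmem _) (c.Dmem _) h))) z
    rw [← c.κeq z hz] at h1
    exact le_of_mul_le_mul_right h1 (c.AwD_pos z)

lemma bdd_intervalIntegrable {f : ℝ → ℝ} (hf : Measurable f) {C : ℝ} (hC : ∀ x, |f x| ≤ C)
    (x y : ℝ) : IntervalIntegrable f volume x y := by
  rw [intervalIntegrable_iff]
  have : IsFiniteMeasure (volume.restrict (uIoc x y)) := ⟨by
    simp only [MeasurableSet.univ, Measure.restrict_apply, univ_inter]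
    rw [uIoc]; exact measure_Ioc_lt_top⟩
  exact Integrable.of_bound hf.aestronglyMeasurable C (Eventually.of_forall hC)

lemma AAψm (c : Core γ N b L e0 w ψ w' ψ' D κ) :
    Measurable (gA γ (gA γ (fun y => ψ (D y)))) := gA_meas (gA_meas c.ψDm)

lemma k_ge (c : Core γ N b L e0 w ψ w' ψ' D κ) (x : ℝ) :
    gA γ (gA γ (fun y => ψ (D y))) x ≤ gA γ κ x :=
  gA_mono (gA_meas c.ψDm) c.κm (fun x => gA_abs c.ψD_abs x) c.κabs c.fkg x

lemma D_ge (c : Core γ N b L e0 w ψ w' ψ' D κ) (x : ℝ) (hx : 0 < x) :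
    (1 / (N:ℝ)) * gA γ (gA γ (fun y => ψ (D y))) x
    + (((N:ℝ) - 1) / (N:ℝ)) * ((1 / x) * ∫ y in (0:ℝ)..x, gA γ (gA γ (fun y => ψ (D y))) y)
    ≤ D x := by
  have hN := c.Npos
  rw [c.eq x hx.ne']
  have h2 : 0 ≤ ((N:ℝ) - 1) / N := div_nonneg (by linarith) (by linarith)
  have h3 : ∫ y in (0:ℝ)..x, gA γ (gA γ (fun y => ψ (D y))) y ≤ ∫ y in (0:ℝ)..x, gA γ κ y :=
    intervalIntegral.integral_mono hx.le
      (bdd_intervalIntegrable c.AAψm (fun x => gA_abs (fun x => gA_abs c.ψD_abs x) x) _ _)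
      (c.kint _ _) c.k_ge
  have h4 := c.k_ge x
  gcongr
end Core

namespace Core
variable {γ : Measure ℝ} [IsProbabilityMeasure γ] {N : ℕ} {b L e0 : ℝ} {w ψ w' ψ' D κ : ℝ → ℝ}

lemma asym (c : Core γ N b L e0 w ψ w' ψ' D κ) {η : ℝ} (hη : 0 < η) {δ0 : ℝ} (hδ0 : 0 < δ0) :
    ∃ δ, 0 < δ ∧ δ ≤ δ0 ∧ δ < b ∧ (∀ d ∈ Ioc 0 δ, |ψ' d - L| ≤ η) ∧
      (∀ d ∈ Ioc 0 δ, |ψ d - L * d| ≤ η * d) := by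
  have h1 := (Metric.tendsto_nhds.1 c.lim) η hη
  rw [eventually_nhdsWithin_iff, Metric.eventually_nhds_iff] at h1
  obtain ⟨e, he, h1⟩ := h1
  have hb := c.hb
  refine ⟨min δ0 (min (b/2) (e/2)), by positivity, min_le_left _ _, ?_, ?_⟩
  · exact lt_of_le_of_lt ((min_le_right _ _).trans (min_le_left _ _)) (by linarith)
  have hδe : min δ0 (min (b/2) (e/2)) ≤ e / 2 := (min_le_right _ _).trans (min_le_right _ _)
  have hδb : min δ0 (min (b/2) (e/2)) ≤ b / 2 := (min_le_right _ _).trans (min_le_left _ _)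
  set δ := min δ0 (min (b/2) (e/2))
  have h2 : ∀ d ∈ Ioc 0 δ, |ψ' d - L| ≤ η := by
    intro d hd
    have := h1 (y := d) (by rw [Real.dist_eq, sub_zero, abs_of_pos hd.1]; linarith [hd.2]) hd.1
    rw [Real.dist_eq] at this
    exact this.le
  refine ⟨h2, fun d hd => ?_⟩
  apply le_of_forall_pos_le_add
  intro t ht
  -- choose a small d0
  set d0 := min (d/2) (t / (1 + |L|)) with hd0
  have hL : 0 < 1 + |L| := by positivity
  have hd0p : 0 < d0 := lt_min (by linarith [hd.1]) (by positivity)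
  have hd0d : d0 < d := lt_of_le_of_lt (min_le_left _ _) (by linarith [hd.1])
  have hmem : ∀ y ∈ Icc d0 d, y ∈ Ioo 0 b := fun y hy =>
    ⟨hd0p.trans_le hy.1, by linarith [hy.2, hd.2]⟩
  obtain ⟨y, hy, hy'⟩ := exists_hasDerivAt_eq_slope ψ ψ' hd0d
    (fun y hy => (c.dψ y (hmem y hy)).continuousAt.continuousWithinAt)
    (fun y hy => c.dψ y (hmem y ⟨hy.1.le, hy.2.le⟩))
  rw [eq_div_iff (by linarith)] at hy'
  have h3 := h2 y ⟨hd0p.trans hy.1, hy.2.le.trans hd.2⟩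
  have h4 : ψ d - L * d = (ψ' y - L) * (d - d0) + (ψ d0 - L * d0) := by linarith
  rw [h4]
  refine (abs_add_le _ _).trans ?_
  have h5 : |(ψ' y - L) * (d - d0)| ≤ η * d := by
    rw [abs_mul, abs_of_pos (show 0 < d - d0 by linarith)]
    exact mul_le_mul h3 (by linarith) (by linarith) hη.le
  have hm0 := hmem d0 ⟨le_rfl, hd0d.le⟩
  have h6 : |ψ d0 - L * d0| ≤ t := by
    have : |ψ d0 - L * d0| ≤ (1 + |L|) * d0 := by
      refine (abs_sub _ _).trans ?_
      rw [abs_mul, abs_of_nonneg (c.ψpos _ hm0), abs_of_pos hd0p]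
      linarith [c.ψlt _ hm0]
    refine this.trans ?_
    have : d0 ≤ t / (1 + |L|) := min_le_right _ _
    rw [le_div_iff₀ hL] at this
    linarith
  linarith

lemma L_nonneg (c : Core γ N b L e0 w ψ w' ψ' D κ) : 0 ≤ L := by
  by_contra h
  push Not at h
  obtain ⟨δ, h1, h2, h3, h4, h5⟩ := c.asym (η := -L/2) (by linarith) one_pos
  have := (abs_le.1 (h5 δ ⟨h1, le_rfl⟩)).2
  have := c.ψpos δ ⟨h1, h3⟩
  nlinarith

lemma L_le_one (c : Core γ N b L e0 w ψ w' ψ' D κ) : L ≤ 1 := by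
  by_contra h
  push Not at h
  obtain ⟨δ, h1, h2, h3, h4, h5⟩ := c.asym (η := (L-1)/2) (by linarith) one_pos
  have := (abs_le.1 (h5 δ ⟨h1, le_rfl⟩)).1
  have := c.ψlt δ ⟨h1, h3⟩
  nlinarith

lemma du (c : Core γ N b L e0 w ψ w' ψ' D κ) {d : ℝ} (hd : d ∈ Ioo 0 b) :
    HasDerivAt (fun d => Real.log (w d)) (ψ' d / (d - ψ d)) d := by
  have h1 := (c.dw d hd).log (c.wpos d hd).ne'
  have h2 : ψ' d / (d - ψ d) = w' d / w d := by
    rw [div_eq_div_iff (by linarith [c.ψlt d hd]) (c.wpos d hd).ne']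
    exact c.rel d hd
  rw [h2]; exact h1

lemma local1 (c : Core γ N b L e0 w ψ w' ψ' D κ) (hL : L < 1) :
    ∃ c1 > 0, ∃ C ≥ 0, ∀ x ≥ 1, c1 * Real.exp (-(C * x)) ≤ w (D x) := by
  obtain ⟨δ, h1, h2, h3, h4, h5⟩ := c.asym (η := (1-L)/2) (by linarith) one_pos
  obtain ⟨a, ha, hD⟩ := c.D_lower'
  have hL0 := c.L_nonneg
  set C := 2 / (1 - L) with hC
  have hC0 : 0 < C := div_pos two_pos (by linarith)
  refine ⟨w δ, c.wpos δ ⟨h1, h3⟩, C * (δ / a), by positivity, fun x hx => ?_⟩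
  rcases le_or_gt δ (D x) with h | h
  · refine le_trans ?_ (c.wmono ⟨h1, h3⟩ (c.Dmem x) h)
    have : Real.exp (-(C * (δ / a) * x)) ≤ 1 := Real.exp_le_one_iff.2 (by
      have : 0 ≤ C * (δ / a) * x := by positivity
      linarith)
    have := c.wpos δ ⟨h1, h3⟩
    nlinarith
  · have hD0 := (c.Dmem x).1
    have hmem : ∀ y ∈ Icc (D x) δ, y ∈ Ioo 0 b := fun y hy =>
      ⟨hD0.trans_le hy.1, by linarith [hy.2]⟩
    obtain ⟨y, hy, hy'⟩ := exists_ratio_hasDerivAt_eq_ratio_slope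
      Real.log (fun y => y⁻¹) h
      (fun y hy => (Real.hasDerivAt_log (hmem y hy).1.ne').continuousAt.continuousWithinAt)
      (fun y hy => Real.hasDerivAt_log (hmem y ⟨hy.1.le, hy.2.le⟩).1.ne')
      (fun d => Real.log (w d)) (fun d => ψ' d / (d - ψ d))
      (fun y hy => (c.du (hmem y hy)).continuousAt.continuousWithinAt)
      (fun y hy => c.du (hmem y ⟨hy.1.le, hy.2.le⟩))
    have hym := hmem y ⟨hy.1.le, hy.2.le⟩
    have hy5 := (abs_le.1 (h5 y ⟨hym.1, hy.2.le⟩)).2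
    have hy4 := (abs_le.1 (h4 y ⟨hym.1, hy.2.le⟩)).2
    have hr : (1 - L) / 2 * y ≤ y - ψ y := by nlinarith
    have hq : y * (ψ' y / (y - ψ y)) ≤ C := by
      rw [← mul_div_assoc, div_le_iff₀ (by linarith [c.ψlt y hym])]
      have : C * ((1 - L) / 2 * y) = y := by
        have : (1 - L) ≠ 0 := by linarith
        rw [hC]; field_simp
      have h7 : C * ((1 - L) / 2 * y) ≤ C * (y - ψ y) := mul_le_mul_of_nonneg_left hr hC0.le
      have : y * ψ' y ≤ y * 1 := mul_le_mul_of_nonneg_left (by linarith) hym.1.le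
      linarith
    have e1 : Real.log (w δ) - Real.log (w (D x))
        = (y * (ψ' y / (y - ψ y))) * (Real.log δ - Real.log (D x)) := by
      have : (Real.log (w δ) - Real.log (w (D x))) * (y⁻¹ * y)
        = (y * (ψ' y / (y - ψ y))) * (Real.log δ - Real.log (D x)) := by
        rw [← mul_assoc, hy']; ring
      rwa [inv_mul_cancel₀ hym.1.ne', mul_one] at this
    have hlog : Real.log δ - Real.log (D x) ≤ δ / a * x := by
      rw [← Real.log_div h1.ne' hD0.ne']
      refine (Real.log_le_self (by positivity)).trans ?_
      rw [div_le_iff₀ hD0]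
      have h8 := hD x hx
      rw [div_le_iff₀ (by linarith)] at h8
      rw [div_mul_eq_mul_div, div_mul_eq_mul_div, le_div_iff₀ ha]
      nlinarith
    have hlog0 : 0 ≤ Real.log δ - Real.log (D x) := by
      have := Real.log_le_log hD0 h.le
      linarith
    have e2 : Real.log (w δ) - Real.log (w (D x)) ≤ C * (δ / a * x) := by
      rw [e1]
      exact mul_le_mul hq hlog hlog0 hC0.le
    have hwδ := c.wpos δ ⟨h1, h3⟩
    have hwD := c.wpos _ (c.Dmem x)
    rw [← Real.exp_log hwδ, ← Real.exp_add, ← Real.exp_log hwD, Real.exp_le_exp]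
    linarith

lemma sub (c : Core γ N b L e0 w ψ w' ψ' D κ) (hL : L = 1)
    (hw0 : ∀ p > 0, ∃ d ∈ Ioo 0 b, w d < p) {ε : ℝ} (hε : 0 < ε) (hε2 : ε ≤ 1/2)
    {δ0 : ℝ} (hδ0 : 0 < δ0) :
    ∃ δ, 0 < δ ∧ δ ≤ δ0 ∧ δ < b ∧ ∃ ρ : ℝ → ℝ, (∀ t ≤ 0, ρ t = δ) ∧
      (∀ t ≥ 0, w (ρ t) = w δ * Real.exp (-t)) ∧ Antitone ρ ∧ (∀ t, ρ t ∈ Ioc 0 δ) ∧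
      (∀ t t', ρ t - ψ (ρ t) ≤ (ρ t' - ψ (ρ t')) * Real.exp (2 * ε * |t - t'|)) ∧
      (∀ t t', t ≤ t' → ψ (ρ t) - ψ (ρ t') ≤
        (ρ t - ψ (ρ t)) * Real.exp (2 * ε * (t' - t)) * (t' - t)) ∧
      (∀ t t', 0 ≤ t → t ≤ t' → (ρ t' - ψ (ρ t')) * Real.exp (-(2 * ε * (t' - t))) * (t' - t)
        ≤ ψ (ρ t) - ψ (ρ t')) ∧
      (∀ d1 d2, 0 < d1 → d1 ≤ d2 → d2 ≤ δ → ψ d2 - ψ d1 ≤ (1 + ε) * (d2 - d1)) := by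
  obtain ⟨δ, h1, h2, h3, h4, -⟩ := c.asym hε hδ0
  rw [hL] at h4
  have hmem : ∀ d ∈ Ioc 0 δ, d ∈ Ioo 0 b := fun d hd => ⟨hd.1, hd.2.trans_lt h3⟩
  have hrpos : ∀ d ∈ Ioc 0 δ, 0 < d - ψ d := fun d hd => by linarith [c.ψlt d (hmem d hd)]
  have hψ'1 : ∀ d ∈ Ioc 0 δ, 1 - ε ≤ ψ' d := fun d hd => by
    have := (abs_le.1 (h4 d hd)).1; linarith
  have hψ'2 : ∀ d ∈ Ioc 0 δ, ψ' d ≤ 1 + ε := fun d hd => by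
    have := (abs_le.1 (h4 d hd)).2; linarith
  -- u strictly monotone
  have humono : ∀ d1 d2, 0 < d1 → d1 < d2 → d2 ≤ δ → Real.log (w d1) < Real.log (w d2) := by
    intro d1 d2 p1 p2 p3
    obtain ⟨y, hy, hy'⟩ := exists_hasDerivAt_eq_slope (fun d => Real.log (w d))
      (fun d => ψ' d / (d - ψ d)) p2
      (fun y hy => (c.du (hmem y ⟨p1.trans_le hy.1, hy.2.trans p3⟩)).continuousAt.continuousWithinAt)
      (fun y hy => c.du (hmem y ⟨p1.trans hy.1, hy.2.le.trans p3⟩))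
    have hym : y ∈ Ioc 0 δ := ⟨p1.trans hy.1, hy.2.le.trans p3⟩
    have : 0 < ψ' y / (y - ψ y) := div_pos (by linarith [hψ'1 y hym]) (hrpos y hym)
    simp only [hy'] at this
    rw [div_pos_iff_of_pos_right (by linarith)] at this
    linarith
  -- comparison of r
  have hr : ∀ d1 d2, 0 < d1 → d1 ≤ d2 → d2 ≤ δ →
      |Real.log (d2 - ψ d2) - Real.log (d1 - ψ d1)|
        ≤ 2 * ε * (Real.log (w d2) - Real.log (w d1)) := by
    intro d1 d2 p1 p2 p3
    rcases p2.eq_or_lt with rfl | p2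
    · simp
    have hm : ∀ y ∈ Icc d1 d2, y ∈ Ioc 0 δ := fun y hy => ⟨p1.trans_le hy.1, hy.2.trans p3⟩
    have hder : ∀ y ∈ Ioc 0 δ, HasDerivAt (fun d => Real.log (d - ψ d))
        ((1 - ψ' y) / (y - ψ y)) y := fun y hy =>
      ((hasDerivAt_id y).sub (c.dψ y (hmem y hy))).log (hrpos y hy).ne'
    obtain ⟨y, hy, hy'⟩ := exists_ratio_hasDerivAt_eq_ratio_slope
      (fun d => Real.log (w d)) (fun d => ψ' d / (d - ψ d)) p2
      (fun y hy => (c.du (hmem y (hm y hy))).continuousAt.continuousWithinAt)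
      (fun y hy => c.du (hmem y (hm y ⟨hy.1.le, hy.2.le⟩)))
      (fun d => Real.log (d - ψ d)) (fun y => (1 - ψ' y) / (y - ψ y))
      (fun y hy => (hder y (hm y hy)).continuousAt.continuousWithinAt)
      (fun y hy => hder y (hm y ⟨hy.1.le, hy.2.le⟩))
    have hym := hm y ⟨hy.1.le, hy.2.le⟩
    have hu := humono d1 d2 p1 p2 p3
    have hrp := hrpos y hym
    set A := Real.log (d2 - ψ d2) - Real.log (d1 - ψ d1)
    set U := Real.log (w d2) - Real.log (w d1)
    have e1 : A * ψ' y = U * (1 - ψ' y) := by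
      simp only [← mul_div_assoc] at hy'
      rw [div_left_inj' hrp.ne'] at hy'
      exact hy'
    have a1 := hψ'1 y hym
    have e2 : |A| * ψ' y ≤ U * ε := by
      rw [← abs_of_pos (show 0 < ψ' y by linarith), ← abs_mul, e1, abs_mul,
        abs_of_pos (show 0 < U by simp only [U]; linarith)]
      refine mul_le_mul_of_nonneg_left ?_ (by simp only [U]; linarith)
      rw [abs_sub_comm]; exact h4 y hym
    have e3 : |A| * (1/2) ≤ |A| * ψ' y := mul_le_mul_of_nonneg_left (by linarith) (abs_nonneg _)
    linarith
  have hψu : ∀ d1 d2, 0 < d1 → d1 ≤ d2 → d2 ≤ δ → ∃ y ∈ Icc d1 d2,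
      ψ d2 - ψ d1 = (y - ψ y) * (Real.log (w d2) - Real.log (w d1)) := by
    intro d1 d2 p1 p2 p3
    rcases p2.eq_or_lt with rfl | p2
    · exact ⟨d1, by simp, by simp⟩
    have hm : ∀ y ∈ Icc d1 d2, y ∈ Ioc 0 δ := fun y hy => ⟨p1.trans_le hy.1, hy.2.trans p3⟩
    obtain ⟨y, hy, hy'⟩ := exists_ratio_hasDerivAt_eq_ratio_slope
      (fun d => Real.log (w d)) (fun d => ψ' d / (d - ψ d)) p2
      (fun y hy => (c.du (hmem y (hm y hy))).continuousAt.continuousWithinAt)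
      (fun y hy => c.du (hmem y (hm y ⟨hy.1.le, hy.2.le⟩)))
      ψ ψ'
      (fun y hy => (c.dψ y (hmem y (hm y hy))).continuousAt.continuousWithinAt)
      (fun y hy => c.dψ y (hmem y (hm y ⟨hy.1.le, hy.2.le⟩)))
    have hym := hm y ⟨hy.1.le, hy.2.le⟩
    have hrp := hrpos y hym
    have a1 : 0 < ψ' y := by linarith [hψ'1 y hym]
    refine ⟨y, ⟨hy.1.le, hy.2.le⟩, ?_⟩
    simp only [← mul_div_assoc] at hy'
    rw [div_eq_iff hrp.ne'] at hy'
    have : (ψ d2 - ψ d1) * ψ' y = ((y - ψ y) * (Real.log (w d2) - Real.log (w d1))) * ψ' y := by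
      rw [hy']; ring
    exact mul_right_cancel₀ a1.ne' this
  -- existence of ρ
  have hex : ∀ t, ∃ d ∈ Ioc 0 δ, Real.log (w d) = Real.log (w δ) - max t 0 := by
    intro t
    have hwδ := c.wpos δ ⟨h1, h3⟩
    obtain ⟨d', hd', hlt⟩ := hw0 (w δ * Real.exp (-(max t 0))) (by positivity)
    have hle : w δ * Real.exp (-(max t 0)) ≤ w δ := by
      have : Real.exp (-(max t 0)) ≤ 1 := Real.exp_le_one_iff.2 (by simp)
      nlinarith
    have hd'δ : d' ≤ δ := by
      by_contra hcon
      push Not at hcon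
      have := c.wmono ⟨h1, h3⟩ hd' hcon.le
      linarith
    have hco : ContinuousOn (fun d => Real.log (w d)) (Icc d' δ) := fun y hy =>
      (c.du (hmem y ⟨hd'.1.trans_le hy.1, hy.2⟩)).continuousAt.continuousWithinAt
    have hval : Real.log (w δ) - max t 0 ∈ Icc (Real.log (w d')) (Real.log (w δ)) := by
      constructor
      · have := Real.log_le_log (c.wpos _ hd') hlt.le
        rw [Real.log_mul hwδ.ne' (Real.exp_pos _).ne', Real.log_exp] at this
        linarith
      · linarith [le_max_right t 0]
    obtain ⟨d, hd, hd2⟩ := intermediate_value_Icc hd'δ hco hval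
    exact ⟨d, ⟨hd'.1.trans_le hd.1, hd.2⟩, hd2⟩
  choose ρ hρm hρ using hex
  have hinj : ∀ d1 ∈ Ioc 0 δ, ∀ d2 ∈ Ioc 0 δ, Real.log (w d1) ≤ Real.log (w d2) → d1 ≤ d2 := by
    intro d1 m1 d2 m2 h
    by_contra hcon
    push Not at hcon
    exact absurd (humono d2 d1 m2.1 hcon m1.2) (by linarith)
  have hanti : Antitone ρ := fun t t' h => hinj _ (hρm _) _ (hρm _) (by
    rw [hρ, hρ]; linarith [max_le_max_right 0 h])
  have hmaxdiff : ∀ t t' : ℝ, t ≤ t' → max t' 0 - max t 0 ≤ t' - t := by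
    intro t t' h
    rcases le_total t 0 with h1 | h1 <;> rcases le_total t' 0 with h2 | h2 <;>
      simp [h1, h2] <;> linarith
  -- comparison along t ≤ s
  have hrt : ∀ t t', t ≤ t' → |Real.log (ρ t - ψ (ρ t)) - Real.log (ρ t' - ψ (ρ t'))|
      ≤ 2 * ε * (t' - t) := by
    intro t t' h
    refine (hr _ _ (hρm t').1 (hanti h) (hρm t).2).trans ?_
    rw [hρ, hρ]
    refine mul_le_mul_of_nonneg_left ?_ (by linarith)
    linarith [hmaxdiff t t' h]
  have hrt' : ∀ t t', |Real.log (ρ t - ψ (ρ t)) - Real.log (ρ t' - ψ (ρ t'))|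
      ≤ 2 * ε * |t - t'| := by
    intro t t'
    rcases le_total t t' with h | h
    · rw [abs_of_nonpos (show t - t' ≤ 0 by linarith)]; convert hrt t t' h using 2; ring
    · rw [abs_sub_comm, abs_of_nonneg (show 0 ≤ t - t' by linarith)]; exact hrt t' t h
  have hcmp : ∀ d1 ∈ Ioc 0 δ, ∀ d2 ∈ Ioc 0 δ, ∀ q,
      |Real.log (d1 - ψ d1) - Real.log (d2 - ψ d2)| ≤ q →
      d1 - ψ d1 ≤ (d2 - ψ d2) * Real.exp q := by
    intro d1 m1 d2 m2 q h
    have := (abs_le.1 h).2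
    rw [← Real.exp_log (hrpos d1 m1)]
    rw [← Real.exp_log (hrpos d2 m2)]
    rw [← Real.exp_add, Real.exp_le_exp]; linarith
  refine ⟨δ, h1, h2, h3, ρ, ?_, ?_, hanti, hρm, ?_, ?_, ?_, ?_⟩
  · intro t ht
    have e : Real.log (w (ρ t)) = Real.log (w δ) := by rw [hρ]; simp [ht]
    exact le_antisymm (hρm t).2 (hinj _ ⟨h1, le_rfl⟩ _ (hρm t) e.ge)
  · intro t ht
    have := hρ t
    rw [max_eq_left ht] at this
    rw [← Real.exp_log (c.wpos _ (hmem _ (hρm t))), this, Real.exp_sub, Real.exp_neg,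
      Real.exp_log (c.wpos δ ⟨h1, h3⟩), div_eq_mul_inv]
  · intro t t'
    exact hcmp _ (hρm t) _ (hρm t') _ (hrt' t t')
  · intro t t' h
    obtain ⟨y, hy, hye⟩ := hψu _ _ (hρm t').1 (hanti h) (hρm t).2
    have hym : y ∈ Ioc 0 δ := ⟨(hρm t').1.trans_le hy.1, hy.2.trans (hρm t).2⟩
    rw [hye, hρ, hρ]
    have hu : Real.log (w y) ≥ Real.log (w (ρ t')) :=
      Real.log_le_log (c.wpos _ (hmem _ (hρm t'))) (c.wmono (hmem _ (hρm t')) (hmem _ hym) hy.1)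
    have h5 := hr y (ρ t) hym.1 hy.2 (hρm t).2
    rw [abs_sub_comm] at h5
    have h6 := hcmp y hym (ρ t) (hρm t) _ h5
    have h7 : Real.log (w (ρ t)) - Real.log (w y) ≤ t' - t := by
      have e1 := hρ t
      have e2 := hρ t'
      linarith [hmaxdiff t t' h]
    have h8 : y - ψ y ≤ (ρ t - ψ (ρ t)) * Real.exp (2 * ε * (t' - t)) := by
      refine h6.trans (mul_le_mul_of_nonneg_left ?_ (hrpos _ (hρm t)).le)
      rw [Real.exp_le_exp]; exact mul_le_mul_of_nonneg_left h7 (by linarith)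
    refine mul_le_mul h8 (by linarith [hmaxdiff t t' h]) ?_ ?_
    · linarith [max_le_max_right 0 h]
    · exact mul_nonneg (hrpos _ (hρm t)).le (Real.exp_pos _).le
  · intro t t' h0 h
    obtain ⟨y, hy, hye⟩ := hψu _ _ (hρm t').1 (hanti h) (hρm t).2
    have hym : y ∈ Ioc 0 δ := ⟨(hρm t').1.trans_le hy.1, hy.2.trans (hρm t).2⟩
    rw [hye, hρ, hρ, max_eq_left h0, max_eq_left (h0.trans h)]
    have hu : Real.log (w y) ≤ Real.log (w (ρ t)) :=
      Real.log_le_log (c.wpos _ (hmem _ hym)) (c.wmono (hmem _ hym) (hmem _ (hρm t)) hy.2)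
    have h5 := hr (ρ t') y (hρm t').1 hy.1 hym.2
    rw [abs_sub_comm] at h5
    have h6 := hcmp (ρ t') (hρm t') y hym _ h5
    have h7 : Real.log (w y) - Real.log (w (ρ t')) ≤ t' - t := by
      have e1 := hρ t
      have e2 := hρ t'
      linarith [hmaxdiff t t' h]
    have h8 : ρ t' - ψ (ρ t') ≤ (y - ψ y) * Real.exp (2 * ε * (t' - t)) := by
      refine h6.trans (mul_le_mul_of_nonneg_left ?_ (hrpos _ hym).le)
      rw [Real.exp_le_exp]; exact mul_le_mul_of_nonneg_left h7 (by linarith)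
    have h9 : (ρ t' - ψ (ρ t')) * Real.exp (-(2 * ε * (t' - t))) ≤ y - ψ y := by
      rw [Real.exp_neg, ← div_eq_mul_inv, div_le_iff₀ (Real.exp_pos _)]; exact h8
    calc _ ≤ (y - ψ y) * (t' - t) := mul_le_mul_of_nonneg_right h9 (by linarith)
      _ = _ := by ring
  · intro d1 d2 p1 p2 p3
    rcases p2.eq_or_lt with rfl | p2
    · simp
    obtain ⟨y, hy, hy'⟩ := exists_hasDerivAt_eq_slope ψ ψ' p2
      (fun y hy => (c.dψ y (hmem y ⟨p1.trans_le hy.1, hy.2.trans p3⟩)).continuousAt.continuousWithinAt)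
      (fun y hy => c.dψ y (hmem y ⟨p1.trans hy.1, hy.2.le.trans p3⟩))
    rw [eq_div_iff (by linarith)] at hy'
    rw [← hy']
    exact mul_le_mul_of_nonneg_right (hψ'2 y ⟨p1.trans hy.1, hy.2.le.trans p3⟩) (by linarith)
end Core

namespace Core
variable {γ : Measure ℝ} [IsProbabilityMeasure γ] {N : ℕ} {b L e0 : ℝ} {w ψ w' ψ' D κ : ℝ → ℝ}

lemma gA_compare {f g : ℝ → ℝ} (hf : Measurable f) (hg : Measurable g) {C C' : ℝ}
    (hC : ∀ x, |f x| ≤ C) (hC' : ∀ x, |g x| ≤ C')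
    (he : Integrable (fun u => Real.exp (2 * |u|)) γ) {a a' : ℝ} (ha : 0 ≤ a)
    (h : ∀ z, f z ≤ g z + a * max z 0 + a') (x : ℝ) :
    gA γ f x ≤ gA γ g x + a * (max x 0 + ∫ u, Real.exp (2 * |u|) ∂γ) + a' := by
  have h1 : gA γ f x ≤ ∫ u, (g (x + u) + (a * max x 0 + a * Real.exp (2 * |u|) + a')) ∂γ := by
    refine integral_mono (gA_int hf hC x)
      ((gA_int hg hC' x).add (((integrable_const _).add (he.const_mul a)).add
        (integrable_const _))) ?_
    intro u
    refine (h (x + u)).trans ?_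
    have h2 : max (x + u) 0 ≤ max x 0 + Real.exp (2 * |u|) := by
      have h3 : |u| ≤ Real.exp (2 * |u|) := by
        have := Real.add_one_le_exp (2 * |u|)
        have := abs_nonneg u
        linarith
      refine max_le ?_ (add_nonneg (le_max_right _ _) (Real.exp_pos _).le)
      linarith [le_abs_self u, le_max_left x 0]
    have := mul_le_mul_of_nonneg_left h2 ha
    dsimp only
    linarith
  refine h1.trans (le_of_eq ?_)
  have i1 : Integrable (fun u => g (x + u)) γ := gA_int hg hC' x
  have i3 : Integrable (fun u => a * max x 0 + a * Real.exp (2 * |u|)) γ :=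
    (integrable_const _).add (he.const_mul a)
  have i2 : Integrable (fun u => a * max x 0 + a * Real.exp (2 * |u|) + a') γ :=
    i3.add (integrable_const _)
  rw [integral_add i1 i2, integral_add i3 (integrable_const _),
    integral_add (integrable_const _) (he.const_mul a),
    integral_const_mul a (fun u => Real.exp (2 * |u|))]
  simp only [integral_const, probReal_univ, one_smul, gA]
  ring

set_option maxHeartbeats 4000000 in
lemma local2 (c : Core γ N b L e0 w ψ w' ψ' D κ) (hL : L = 1)
    (hw0 : ∀ p > 0, ∃ d ∈ Ioo 0 b, w d < p) :
    ∃ c1 > 0, ∃ C ≥ 0, ∀ x ≥ 1, c1 * Real.exp (-(C * x)) ≤ w (D x) := by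
  have hN := c.Npos
  have he := c.gexp 2
  set cA := ∫ u, Real.exp (2 * |u|) ∂γ with hcA
  have hcA1 : 1 ≤ cA := by
    have : ∫ u, (1:ℝ) ∂γ ≤ cA := integral_mono (integrable_const _) he (fun u => by
      exact Real.one_le_exp (by positivity : 0 ≤ 2 * |u|))
    simpa using this
  set c2 := cA + cA * cA with hc2
  have hc2p : 1 ≤ c2 := by nlinarith
  set K := 8 * (1 + 2 * c2) with hK
  have hK8 : 8 ≤ K := by linarith
  set ε := 1 / (8 * K) with hε
  have hεp : 0 < ε := by positivity
  have hε8 : ε ≤ 1/8 := by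
    rw [hε]; apply one_div_le_one_div_of_le <;> linarith
  have hεK : 2 * ε * K = 1/4 := by rw [hε]; field_simp; norm_num
  set x1 := K + 64 * cA with hx1
  set x2 := x1 + K with hx2
  obtain ⟨δ0, hδ0, hDδ⟩ := c.D_lower x2
  obtain ⟨δ, hδ, hδδ0, hδb, ρ, ρ0, ρw, ρanti, ρm, ρs, ρa, ρa', ρL⟩ :=
    c.sub hL hw0 hεp (by linarith) hδ0
  set d : ℝ → ℝ := fun x => ρ (x - x1) with hd
  set a : ℝ → ℝ := fun x => ψ (d x) with ha
  set s : ℝ → ℝ := fun x => d x - ψ (d x) with hs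
  have hdanti : Antitone d := fun x y h => ρanti (by linarith)
  have hdm : ∀ x, d x ∈ Ioo 0 b := fun x => ⟨(ρm _).1, (ρm _).2.trans_lt hδb⟩
  have haanti : Antitone a := fun x y h => c.ψmono (hdm _) (hdm _) (hdanti h)
  have hsm : Measurable s := hdanti.measurable.sub haanti.measurable
  have habs : ∀ x, |a x| ≤ b := fun x => by
    rw [abs_of_nonneg (c.ψpos _ (hdm x))]
    exact ((c.ψlt _ (hdm x)).trans (hdm x).2).le
  have hspos : ∀ x, 0 < s x := fun x => by
    have := c.ψlt _ (hdm x); simp only [hs]; linarith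
  have hsabs : ∀ x, |s x| ≤ b := fun x => by
    rw [abs_of_pos (hspos x)]
    have := c.ψpos _ (hdm x)
    have := (hdm x).2
    simp only [hs]; linarith
  have hs1 : ∀ x y, s x ≤ s y * Real.exp (2 * ε * |x - y|) := fun x y => by
    have := ρs (x - x1) (y - x1)
    rwa [show x - x1 - (y - x1) = x - y by ring] at this
  have hlow : ∀ x u, a x - s x * Real.exp (2 * |u|) ≤ a (x + u) := by
    intro x u
    rcases le_total u 0 with hu | hu
    · have := haanti (show x + u ≤ x by linarith)
      have := mul_pos (hspos x) (Real.exp_pos (2 * |u|))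
      linarith
    · have h1 := ρa (x - x1) (x + u - x1) (by linarith)
      rw [show x + u - x1 - (x - x1) = u by ring] at h1
      rw [abs_of_nonneg hu]
      have h2 : Real.exp (2 * ε * u) * u ≤ Real.exp (2 * u) := by
        have e1 : Real.exp (2 * ε * u) ≤ Real.exp u := by
          rw [Real.exp_le_exp]; nlinarith
        have e2 : u ≤ Real.exp u := by linarith [Real.add_one_le_exp u]
        calc _ ≤ Real.exp u * Real.exp u := mul_le_mul e1 e2 hu (Real.exp_pos _).le
          _ = _ := by rw [← Real.exp_add]; ring_nf
      have h3 := mul_le_mul_of_nonneg_left h2 (hspos x).le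
      change ψ (d x) - ψ (d (x + u)) ≤ s x * _ * u at h1
      rw [← mul_assoc] at h3
      change ψ (d x) - _ ≤ ψ (d (x + u))
      linarith
  have hAa : ∀ x, a x - cA * s x ≤ gA γ a x := by
    intro x
    have h1 : ∫ u, (a x - s x * Real.exp (2 * |u|)) ∂γ ≤ gA γ a x :=
      integral_mono ((integrable_const _).sub (he.const_mul _))
        (gA_int haanti.measurable habs x) (hlow x)
    rw [integral_sub (integrable_const _) (he.const_mul _), integral_const_mul] at h1
    simp only [integral_const, probReal_univ, one_smul] at h1
    linarith
  have hAs : ∀ x, gA γ s x ≤ cA * s x := by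
    intro x
    have h1 : gA γ s x ≤ ∫ u, (s x * Real.exp (2 * |u|)) ∂γ := by
      refine integral_mono (gA_int hsm hsabs x) (he.const_mul _) (fun u => ?_)
      refine (hs1 (x + u) x).trans (mul_le_mul_of_nonneg_left ?_ (hspos x).le)
      rw [Real.exp_le_exp, add_sub_cancel_left]
      have := abs_nonneg u
      nlinarith
    rw [integral_const_mul] at h1
    linarith
  have hAAa : ∀ x, a x - c2 * s x ≤ gA γ (gA γ a) x := by
    intro x
    have i1 := gA_int (γ := γ) haanti.measurable habs x
    have i2 := gA_int (γ := γ) hsm hsabs x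
    have h1 : ∫ u, (a (x + u) - cA * s (x + u)) ∂γ ≤ gA γ (gA γ a) x :=
      integral_mono (i1.sub (i2.const_mul _))
        (gA_int (gA_meas haanti.measurable) (fun x => gA_abs habs x) x) (fun u => hAa _)
    rw [integral_sub i1 (i2.const_mul _), integral_const_mul] at h1
    have h2 : gA γ a x - cA * gA γ s x ≤ gA γ (gA γ a) x := h1
    have h3 := hAa x
    have h4 := mul_le_mul_of_nonneg_left (hAs x) (by linarith : 0 ≤ cA)
    rw [hc2]; nlinarith
  have hAAanti : Antitone (gA γ (gA γ a)) :=
    gA_anti (gA_anti haanti habs) (fun x => gA_abs habs x)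
  have hAAabs : ∀ x, |gA γ (gA γ a) x| ≤ b := fun x => gA_abs (fun x => gA_abs habs x) x
  have hAAint : ∀ x y, IntervalIntegrable (gA γ (gA γ a)) volume x y := fun x y =>
    hAAanti.intervalIntegrable
  have hexp : Real.exp (1/4) ≤ 2 := by
    have := Real.one_sub_le_exp_neg (1/4)
    rw [Real.exp_neg] at this
    have hp := Real.exp_pos (1/4)
    have h2 : (1 - 1/4) * Real.exp (1/4) ≤ 1 := by
      calc _ ≤ (Real.exp (1/4))⁻¹ * Real.exp (1/4) := mul_le_mul_of_nonneg_right this hp.le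
        _ = 1 := inv_mul_cancel₀ hp.ne'
    linarith
  have hn1 : (1:ℝ)/2 ≤ ((N:ℝ) - 1) / N := by rw [div_le_div_iff₀] <;> linarith
  have hn2 : 1 / (N:ℝ) ≤ 1/2 := by apply one_div_le_one_div_of_le <;> linarith
  have hn3 : 1 / (N:ℝ) + ((N:ℝ) - 1) / N = 1 := by field_simp; ring
  have hn4 : 0 < 1 / (N:ℝ) := by positivity
  -- sub-solution
  have hsubs : ∀ x ≥ x2, d x ≤ (1 / (N:ℝ)) * gA γ (gA γ a) x
      + (((N:ℝ) - 1) / (N:ℝ)) * ((1 / x) * ∫ y in (0:ℝ)..x, gA γ (gA γ a) y) := by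
    intro x hx
    have hxp : 0 < x := by linarith
    have hx2K : 2 * K ≤ x := by linarith
    set S := s x with hS
    have hSp : 0 < S := hspos x
    have q1 : a x + (K/2 - 2 * c2) * S ≤ gA γ (gA γ a) (x - K) := by
      have t1 := hAAa (x - K)
      have t2 := ρa' (x - K - x1) (x - x1) (by linarith) (by linarith)
      rw [show x - x1 - (x - K - x1) = K by ring, hεK] at t2
      have t3 := hs1 (x - K) x
      rw [show x - K - x = -K by ring, abs_neg, abs_of_pos (by linarith : 0 < K), hεK] at t3
      have t4 : s (x - K) ≤ 2 * S := by
        refine t3.trans ?_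
        rw [mul_comm]; exact mul_le_mul_of_nonneg_right hexp hSp.le
      change S * Real.exp (-(1/4)) * K ≤ a (x - K) - a x at t2
      have t5 : (1/2:ℝ) ≤ Real.exp (-(1/4)) := by
        have := Real.one_sub_le_exp_neg (1/4); linarith
      have t6 : S * (1/2) * K ≤ S * Real.exp (-(1/4)) * K := by gcongr
      have t7 := mul_le_mul_of_nonneg_left t4 (by linarith : 0 ≤ c2)
      nlinarith
    have q2 := hAAa x
    have q3 : (x - K) * (a x + (K/2 - 2 * c2) * S) + K * (a x - c2 * S)
        ≤ ∫ y in (0:ℝ)..x, gA γ (gA γ a) y := by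
      rw [← intervalIntegral.integral_add_adjacent_intervals (hAAint 0 (x - K)) (hAAint (x-K) x)]
      have r1 : ∫ y in (0:ℝ)..(x-K), (a x + (K/2 - 2 * c2) * S) ≤
          ∫ y in (0:ℝ)..(x-K), gA γ (gA γ a) y :=
        intervalIntegral.integral_mono_on (by linarith) (by simp) (hAAint _ _)
          (fun y hy => q1.trans (hAAanti hy.2))
      have r2 : ∫ y in (x-K)..x, (a x - c2 * S) ≤
          ∫ y in (x-K)..x, gA γ (gA γ a) y :=
        intervalIntegral.integral_mono_on (by linarith) (by simp) (hAAint _ _)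
          (fun y hy => q2.trans (hAAanti hy.2))
      simp only [intervalIntegral.integral_const, smul_eq_mul] at r1 r2
      linarith
    have q4 : a x + (K/4 - 2 * c2) * S ≤ (1 / x) * ∫ y in (0:ℝ)..x, gA γ (gA γ a) y := by
      rw [one_div, inv_mul_eq_div, le_div_iff₀ hxp]
      refine le_trans ?_ q3
      have : 0 ≤ (x - 2 * K) * S * (K/4) := by
        apply mul_nonneg (mul_nonneg _ hSp.le) <;> linarith
      have : 0 ≤ K * S * c2 := by positivity
      nlinarith
    have q5 := mul_le_mul_of_nonneg_left q4 (by linarith : 0 ≤ ((N:ℝ) - 1) / N)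
    have q6 := mul_le_mul_of_nonneg_left q2 hn4.le
    refine le_trans ?_ (add_le_add q6 q5)
    have e1 : d x = a x + S := by simp only [hS, hs, ha]; ring
    rw [e1]
    set p := 1 / (N:ℝ)
    have hp : ((N:ℝ) - 1) / N = 1 - p := by linarith
    rw [hp] at hn1 ⊢
    -- goal : a + S ≤ p (a - c2 S) + (1-p)(a + (K/4 - 2 c2) S)
    have e2 : 1 ≤ -p * c2 + (1 - p) * (K/4 - 2*c2) := by
      have : K / 4 - 2 * c2 = 2 + 2 * c2 := by rw [hK]; ring
      rw [this]; nlinarith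
    have e3 := mul_le_mul_of_nonneg_right e2 hSp.le
    change a x + S ≤ p * (a x - c2 * S) + _
    linarith
  -- contraction
  have hcontr : ∀ E, 0 ≤ E → (∀ z, d z - D z ≤ E * max z 0) →
      ∀ z, d z - D z ≤ (225/256 * E) * max z 0 := by
    intro E hE h z
    rcases le_total z x2 with hz | hz
    · have h1 : d z ≤ D z := ((ρm _).2.trans hδδ0).trans (hDδ z hz)
      have : 0 ≤ 225/256 * E * max z 0 := by positivity
      linarith
    have hzp : 0 < z := by linarith
    have h1 : ∀ y, a y ≤ ψ (D y) + ((1 + ε) * E) * max y 0 + 0 := by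
      intro y
      rcases le_total (d y) (D y) with h2 | h2
      · have := c.ψmono (hdm y) (c.Dmem y) h2
        have : 0 ≤ ((1 + ε) * E) * max y 0 := by positivity
        simp only [ha]; linarith
      · have h3 := ρL (D y) (d y) (c.Dmem y).1 h2 (ρm _).2
        have h4 := mul_le_mul_of_nonneg_left (h y) (by linarith : 0 ≤ 1 + ε)
        simp only [ha]; linarith
    have hE' : 0 ≤ (1 + ε) * E := by positivity
    have h2 := gA_compare haanti.measurable c.ψDm habs c.ψD_abs he hE' h1
    have h3 := gA_compare (gA_meas haanti.measurable) (gA_meas c.ψDm) (fun x => gA_abs habs x)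
      (fun x => gA_abs c.ψD_abs x) he hE' (a' := (1 + ε) * E * cA)
      (fun x => (h2 x).trans (by rw [← hcA]; linarith))
    rw [← hcA] at h3
    set B := gA γ (gA γ (fun y => ψ (D y))) with hB
    have h4 : ∀ y, 0 ≤ y → gA γ (gA γ a) y ≤ B y + ((1 + ε) * E) * (y + 2 * cA) := by
      intro y hy
      have := h3 y
      rw [max_eq_left hy] at this
      linarith
    have hBint : ∀ x y, IntervalIntegrable B volume x y :=
      bdd_intervalIntegrable c.AAψm (fun x => gA_abs (fun x => gA_abs c.ψD_abs x) x)
    have hci : IntervalIntegrable (fun y => ((1 + ε) * E) * (y + 2 * cA)) volume 0 z :=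
      Continuous.intervalIntegrable (by fun_prop) _ _
    have h5 : ∫ y in (0:ℝ)..z, gA γ (gA γ a) y ≤ (∫ y in (0:ℝ)..z, B y) +
        ((1 + ε) * E) * (z^2/2 + 2 * cA * z) := by
      have t1 : ∫ y in (0:ℝ)..z, gA γ (gA γ a) y ≤
          ∫ y in (0:ℝ)..z, (B y + ((1 + ε) * E) * (y + 2 * cA)) :=
        intervalIntegral.integral_mono_on hzp.le (hAAint _ _)
          ((hBint _ _).add hci) (fun y hy => h4 y hy.1)
      rw [intervalIntegral.integral_add (hBint _ _) hci,
        intervalIntegral.integral_const_mul, intervalIntegral.integral_add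
          (Continuous.intervalIntegrable (by fun_prop) _ _) (by simp), integral_id] at t1
      simp only [intervalIntegral.integral_const, smul_eq_mul] at t1
      refine t1.trans (le_of_eq ?_)
      ring
    have h6 : (1 / z) * ∫ y in (0:ℝ)..z, gA γ (gA γ a) y ≤ (1 / z) * (∫ y in (0:ℝ)..z, B y) +
        ((1 + ε) * E) * (z/2 + 2 * cA) := by
      have := mul_le_mul_of_nonneg_left h5 (by positivity : 0 ≤ 1 / z)
      refine this.trans (le_of_eq ?_)
      field_simp
    have h7 := hsubs z hz
    have h8 := c.D_ge z hzp
    rw [← hB] at h8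
    have h9 := mul_le_mul_of_nonneg_left h6 (by linarith : 0 ≤ ((N:ℝ) - 1) / N)
    have h10 := mul_le_mul_of_nonneg_left (h4 z hzp.le) hn4.le
    rw [max_eq_left hzp.le]
    set p := 1 / (N:ℝ)
    have hp : ((N:ℝ) - 1) / N = 1 - p := by linarith
    rw [hp] at h7 h8 h9
    have hcz : 2 * cA ≤ z / 32 := by linarith
    have h11 : d z - D z ≤ ((1 + ε) * E) * (p * (z + 2 * cA) + (1 - p) * (z / 2 + 2 * cA)) := by
      nlinarith
    refine h11.trans ?_
    have h12 : p * (z + 2 * cA) + (1 - p) * (z / 2 + 2 * cA) ≤ 25/32 * z := by nlinarith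
    calc _ ≤ ((1 + ε) * E) * (25/32 * z) := mul_le_mul_of_nonneg_left h12 hE'
      _ ≤ ((1 + 1/8) * E) * (25/32 * z) := by gcongr
      _ = _ := by ring
  have hiter : ∀ n : ℕ, ∀ z, d z - D z ≤ ((225/256)^n * (δ / x2)) * max z 0 := by
    intro n
    have hx2p : 0 < x2 := by linarith
    induction n with
    | zero =>
      intro z
      rcases le_total z x2 with hz | hz
      · have h1 : d z ≤ D z := ((ρm _).2.trans hδδ0).trans (hDδ z hz)
        have : 0 ≤ (225/256)^0 * (δ / x2) * max z 0 := by positivity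
        linarith
      · rw [max_eq_left (by linarith), pow_zero, one_mul]
        have h1 : δ ≤ δ / x2 * z := by
          rw [div_mul_eq_mul_div, le_div_iff₀ hx2p]; nlinarith
        have : d z ≤ δ := (ρm _).2
        linarith [(c.Dmem z).1]
    | succ n ih =>
      have := hcontr _ (by positivity) ih
      intro z
      refine (this z).trans (le_of_eq ?_)
      rw [pow_succ]; ring
  have hfin : ∀ z, d z ≤ D z := by
    intro z
    have t : Tendsto (fun n : ℕ => (((225/256:ℝ))^n * (δ / x2)) * max z 0) atTop
        (nhds ((0 * (δ / x2)) * max z 0)) :=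
      ((tendsto_pow_atTop_nhds_zero_of_lt_one (by norm_num) (by norm_num)).mul_const _).mul_const _
    have := ge_of_tendsto' t (fun n => hiter n z)
    simp at this
    exact this
  refine ⟨w δ, c.wpos _ ⟨hδ, hδb⟩, 1, by norm_num, fun x hx => ?_⟩
  refine le_trans ?_ (c.wmono (hdm x) (c.Dmem x) (hfin x))
  have hwδ := c.wpos δ ⟨hδ, hδb⟩
  rcases le_total x x1 with h | h
  · have : d x = δ := ρ0 _ (by linarith)
    rw [this]
    have : Real.exp (-(1 * x)) ≤ 1 := Real.exp_le_one_iff.2 (by linarith)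
    nlinarith
  · have : w (d x) = w δ * Real.exp (-(x - x1)) := ρw _ (by linarith)
    rw [this]
    refine mul_le_mul_of_nonneg_left ?_ hwδ.le
    rw [Real.exp_le_exp]; linarith

lemma locality (c : Core γ N b L e0 w ψ w' ψ' D κ) :
    ∃ c1 > 0, ∃ C ≥ 0, ∀ x ≥ 1, c1 * Real.exp (-(C * x)) ≤ w (D x) := by
  rcases c.L_le_one.lt_or_eq with h | h
  · exact c.local1 h
  · by_cases hw : ∀ p > 0, ∃ d ∈ Ioo 0 b, w d < p
    · exact c.local2 h hw
    · push Not at hw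
      obtain ⟨p, hp, hw⟩ := hw
      exact ⟨p, hp, 0, le_rfl, fun x _ => by simpa using hw _ (c.Dmem x)⟩
end Core

noncomputable def Gf (γ : Measure ℝ) (κ : ℝ → ℝ) (x : ℝ) : ℝ :=
  (1 / x) * ∫ y in (0:ℝ)..x, gA γ κ y

lemma gA_ub {γ : Measure ℝ} [IsProbabilityMeasure γ] {f : ℝ → ℝ} (hf : Measurable f) {b : ℝ}
    (hC : ∀ x, |f x| ≤ b) {l : ℝ} (hl : 0 ≤ l) (he : Integrable (fun u => Real.exp (l * |u|)) γ)
    {S r x : ℝ} (hS : 0 ≤ S) (h : ∀ z, |z - x| ≤ r → f z ≤ S) :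
    gA γ f x ≤ S + b * (∫ u, Real.exp (l * |u|) ∂γ) * Real.exp (-(l * r)) := by
  have hb : 0 ≤ b := (abs_nonneg _).trans (hC 0)
  have h1 : gA γ f x ≤ ∫ u, (S + (b * Real.exp (-(l * r))) * Real.exp (l * |u|)) ∂γ := by
    refine integral_mono (gA_int hf hC x) ((integrable_const _).add (he.const_mul _)) ?_
    intro u
    dsimp only
    rw [mul_assoc, ← Real.exp_add]
    rcases le_total |u| r with hu | hu
    · have := h (x + u) (by simpa using hu)
      have := mul_nonneg hb (Real.exp_pos (-(l * r) + l * |u|)).le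
      linarith
    · have h2 : 1 ≤ Real.exp (-(l * r) + l * |u|) := by
        apply Real.one_le_exp; nlinarith
      have := (le_abs_self _).trans (hC (x + u))
      nlinarith
  refine h1.trans (le_of_eq ?_)
  rw [integral_add (integrable_const _) (he.const_mul _),
    integral_const_mul (b * Real.exp (-(l * r))) (fun u => Real.exp (l * |u|))]
  simp only [integral_const, probReal_univ, one_smul]
  ring

lemma gA_lb {γ : Measure ℝ} [IsProbabilityMeasure γ] {f : ℝ → ℝ} (hf : Measurable f) {b : ℝ}
    (hC : ∀ x, |f x| ≤ b) (hf0 : ∀ x, 0 ≤ f x)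
    {l : ℝ} (hl : 0 ≤ l) (he : Integrable (fun u => Real.exp (l * |u|)) γ)
    {S r x : ℝ} (hS : S ≤ b) (h : ∀ z, |z - x| ≤ r → S ≤ f z) :
    S - b * (∫ u, Real.exp (l * |u|) ∂γ) * Real.exp (-(l * r)) ≤ gA γ f x := by
  have hb : 0 ≤ b := (abs_nonneg _).trans (hC 0)
  have h1 : ∫ u, (S - (b * Real.exp (-(l * r))) * Real.exp (l * |u|)) ∂γ ≤ gA γ f x := by
    refine integral_mono ((integrable_const _).sub (he.const_mul _)) (gA_int hf hC x) ?_
    intro u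
    dsimp only
    rw [mul_assoc, ← Real.exp_add]
    rcases le_total |u| r with hu | hu
    · have := h (x + u) (by simpa using hu)
      have := mul_nonneg hb (Real.exp_pos (-(l * r) + l * |u|)).le
      linarith
    · have h2 : 1 ≤ Real.exp (-(l * r) + l * |u|) := by
        apply Real.one_le_exp; nlinarith
      have := hf0 (x + u)
      nlinarith
  refine le_trans (le_of_eq ?_) h1
  rw [integral_sub (integrable_const _) (he.const_mul _),
    integral_const_mul (b * Real.exp (-(l * r))) (fun u => Real.exp (l * |u|))]
  simp only [integral_const, probReal_univ, one_smul]
  ring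

namespace Core
variable {γ : Measure ℝ} [IsProbabilityMeasure γ] {N : ℕ} {b L e0 : ℝ} {w ψ w' ψ' D κ : ℝ → ℝ}

lemma κ_ub (c : Core γ N b L e0 w ψ w' ψ' D κ) {ε : ℝ} (hε : 0 < ε) :
    ∃ C ≥ 0, ∀ x ≥ 2, ∀ S ≥ 0, (∀ z, |z - x| ≤ ε * x → ψ (D z) ≤ S) →
      κ x ≤ S + C * Real.exp (-x) := by
  obtain ⟨c1, hc1, C, hC, hw⟩ := c.locality
  have hb := c.hb
  set g1 := γ.real (Ioo (-1) 1) with hg1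
  have hg1p : 0 < g1 := ENNReal.toReal_pos
    (c.gpos _ isOpen_Ioo ⟨0, by simp⟩).ne' (measure_ne_top _ _)
  set l := (C + 1) / ε with hl
  have hlp : 0 ≤ l := by positivity
  have he := c.gexp l
  set E := ∫ u, Real.exp (l * |u|) ∂γ with hE
  have hE0 : 0 ≤ E := integral_nonneg fun u => (Real.exp_pos _).le
  refine ⟨b * E * Real.exp C / (c1 * g1), by positivity, fun x hx S hS h => ?_⟩
  have hden : c1 * Real.exp (-(C * (x + 1))) * g1 ≤ gA γ (fun y => w (D y)) x := by
    have h1 : ∫ u, (Ioo (-1) 1).indicator (fun _ => c1 * Real.exp (-(C * (x + 1)))) u ∂γ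
        = c1 * Real.exp (-(C * (x + 1))) * g1 := by
      rw [integral_indicator measurableSet_Ioo]; simp [mul_comm, hg1]
    rw [← h1]
    refine integral_mono ((integrable_const _).indicator measurableSet_Ioo)
      (gA_int c.wDm c.wD_abs x) ?_
    intro u
    by_cases hu : u ∈ Ioo (-1:ℝ) 1
    · rw [indicator_of_mem hu]
      refine le_trans ?_ (hw (x + u) (by linarith [hu.1]))
      refine mul_le_mul_of_nonneg_left ?_ hc1.le
      rw [Real.exp_le_exp]
      nlinarith [hu.2]
    · rw [indicator_of_notMem hu]; exact (c.wpos _ (c.Dmem _)).le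
  have hnum : gA γ (fun y => ψ (D y) * w (D y)) x ≤ S * gA γ (fun y => w (D y)) x
      + (b * Real.exp (-(l * (ε * x)))) * E := by
    have i1 := gA_int (γ := γ) c.wDm c.wD_abs x
    have h1 : gA γ (fun y => ψ (D y) * w (D y)) x ≤
        ∫ u, (S * w (D (x + u)) + (b * Real.exp (-(l * (ε * x)))) * Real.exp (l * |u|)) ∂γ := by
      refine integral_mono (gA_int (c.ψDm.mul c.wDm) (C := b * 1) (fun y => ?_) x)
        ((i1.const_mul S).add (he.const_mul _)) ?_
      · rw [Pi.mul_apply, abs_mul]; exact mul_le_mul (c.ψD_abs y) (c.wD_abs y) (abs_nonneg _) hb.le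
      intro u
      dsimp only
      rw [mul_assoc b, ← Real.exp_add]
      have w0 := (c.wpos _ (c.Dmem (x + u))).le
      have w1 := c.wle _ (c.Dmem (x + u))
      rcases le_total |u| (ε * x) with hu | hu
      · have := h (x + u) (by simpa using hu)
        have := mul_nonneg hb.le (Real.exp_pos (-(l * (ε * x)) + l * |u|)).le
        have := mul_le_mul_of_nonneg_right (h (x + u) (by simpa using hu)) w0
        linarith
      · have h2 : 1 ≤ Real.exp (-(l * (ε * x)) + l * |u|) := by
          apply Real.one_le_exp; nlinarith
        have p1 := (le_abs_self _).trans (c.ψD_abs (x + u))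
        have p0 := c.ψpos _ (c.Dmem (x + u))
        have := mul_le_mul p1 w1 w0 hb.le
        have := mul_nonneg hS w0
        nlinarith
    refine h1.trans (le_of_eq ?_)
    rw [integral_add (i1.const_mul S) (he.const_mul _),
      integral_const_mul (b * Real.exp (-(l * (ε * x)))) (fun u => Real.exp (l * |u|)),
      integral_const_mul]
    rfl
  rw [← c.κeq x (by linarith)] at hnum
  have hA := c.AwD_pos x
  set A := gA γ (fun y => w (D y)) x
  have e1 : Real.exp (-(l * (ε * x))) = Real.exp (-(C * (x+1))) * (Real.exp C * Real.exp (-x)) := by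
    rw [← Real.exp_add, ← Real.exp_add]; congr 1; rw [hl]; field_simp; ring
  have h3 : b * Real.exp (-(l * (ε * x))) * E ≤
      (b * E * Real.exp C / (c1 * g1) * Real.exp (-x)) * A := by
    rw [e1]
    calc _ = (b * E * Real.exp C / (c1 * g1) * Real.exp (-x)) *
          (c1 * Real.exp (-(C * (x + 1))) * g1) := by field_simp
      _ ≤ _ := mul_le_mul_of_nonneg_left hden (by positivity)
  refine le_of_mul_le_mul_right ?_ hA
  rw [add_mul]; linarith

lemma k_ub (c : Core γ N b L e0 w ψ w' ψ' D κ) {ε : ℝ} (hε : 0 < ε) (hε1 : ε < 1) :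
    ∃ C ≥ 0, ∀ x ≥ 4, ∀ S ≥ 0, (∀ z, |z - x| ≤ ε * x → ψ (D z) ≤ S) →
      gA γ κ x ≤ S + C * Real.exp (-(x/2)) := by
  obtain ⟨C, hC, hκ⟩ := c.κ_ub (by positivity : 0 < ε / 3)
  have hb := c.hb
  set l := 3 / (2 * ε) with hl
  have hlp : 0 ≤ l := by positivity
  have he := c.gexp l
  set E := ∫ u, Real.exp (l * |u|) ∂γ with hE
  have hE0 : 0 ≤ E := integral_nonneg fun u => (Real.exp_pos _).le
  refine ⟨C + b * E, by positivity, fun x hx S hS h => ?_⟩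
  have h1 := gA_ub (γ := γ) c.κm c.κabs hlp he (x := x) (r := ε / 3 * x)
    (S := S + C * Real.exp (-(x/2))) (by positivity) (by
      intro y hy
      rw [abs_le] at hy
      have hy1 : x * (2/3) ≤ y := by nlinarith
      have hy2 : y ≤ x * (4/3) := by nlinarith
      refine (hκ y (by linarith) S hS (fun z hz => h z ?_)).trans ?_
      · rw [abs_le] at hz ⊢
        have : ε / 3 * y ≤ ε / 3 * (x * (4/3)) := mul_le_mul_of_nonneg_left hy2 (by positivity)
        have : 0 ≤ ε * x := by positivity
        constructor <;> nlinarith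
      · have : Real.exp (-y) ≤ Real.exp (-(x/2)) := by rw [Real.exp_le_exp]; linarith
        nlinarith)
  rw [← hE, show l * (ε / 3 * x) = x / 2 by rw [hl]; field_simp] at h1
  linarith

lemma k_lb (c : Core γ N b L e0 w ψ w' ψ' D κ) {ε : ℝ} (hε : 0 < ε) :
    ∃ C ≥ 0, ∀ x ≥ 4, ∀ S ≤ b, (∀ z, |z - x| ≤ ε * x → S ≤ ψ (D z)) →
      S - C * Real.exp (-(x/2)) ≤ gA γ κ x := by
  have hb := c.hb
  set l := 1 / ε with hl
  have hlp : 0 ≤ l := by positivity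
  have he := c.gexp l
  set E := ∫ u, Real.exp (l * |u|) ∂γ with hE
  have hE0 : 0 ≤ E := integral_nonneg fun u => (Real.exp_pos _).le
  refine ⟨b * E + b * E, by positivity, fun x hx S hS h => ?_⟩
  refine le_trans ?_ (c.k_ge x)
  have hψ0 : ∀ z, 0 ≤ ψ (D z) := fun z => c.ψpos _ (c.Dmem z)
  have e1 : l * (ε / 2 * x) = x / 2 := by rw [hl]; field_simp
  have h1 : ∀ y, |y - x| ≤ ε / 2 * x → S - b * E * Real.exp (-(x/2)) ≤
      gA γ (fun y => ψ (D y)) y := by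
    intro y hy
    have := gA_lb (γ := γ) c.ψDm c.ψD_abs hψ0 hlp he (x := y) (r := ε / 2 * x) (S := S) hS (by
      intro z hz
      apply h
      have := abs_sub_le z y x
      linarith)
    rwa [e1] at this
  have hbE : 0 ≤ b * E * Real.exp (-(x/2)) := by positivity
  have h2 := gA_lb (γ := γ) (gA_meas c.ψDm) (fun x => gA_abs c.ψD_abs x)
    (fun x => integral_nonneg fun u => hψ0 _) hlp he (x := x) (r := ε / 2 * x)
    (S := S - b * E * Real.exp (-(x/2))) (by linarith) h1
  rw [e1] at h2
  linarith

lemma eqG (c : Core γ N b L e0 w ψ w' ψ' D κ) {x : ℝ} (hx : x ≠ 0) :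
    D x = (1 / (N:ℝ)) * gA γ κ x + (1 - 1 / (N:ℝ)) * Gf γ κ x := by
  have := c.Npos
  rw [c.eq x hx, Gf]; congr 2; field_simp

lemma exp_small (C : ℝ) {η : ℝ} (hη : 0 < η) : ∀ᶠ x : ℝ in atTop, C * Real.exp (-(x/2)) ≤ η := by
  have : Tendsto (fun x : ℝ => C * Real.exp (-(x/2))) atTop (nhds (C * 0)) := by
    apply Tendsto.const_mul
    apply Real.tendsto_exp_neg_atTop_nhds_zero.comp
    exact tendsto_id.atTop_div_const (by norm_num)
  rw [mul_zero] at this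
  exact (this.eventually (gt_mem_nhds hη)).mono fun x hx => hx.le

lemma step0 (c : Core γ N b L e0 w ψ w' ψ' D κ) {S : ℝ} (hS : 0 ≤ S)
    (h : ∀ᶠ z in atTop, ψ (D z) ≤ S) {η : ℝ} (hη : 0 < η) : ∀ᶠ x in atTop, D x ≤ S + η := by
  obtain ⟨C, hC, hk⟩ := c.k_ub (by norm_num : (0:ℝ) < 1/2) (by norm_num)
  obtain ⟨X, hX⟩ := eventually_atTop.1 h
  have hN := c.Npos
  have k1 : ∀ᶠ x in atTop, gA γ κ x ≤ S + η/2 := by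
    filter_upwards [exp_small C (half_pos hη), eventually_ge_atTop 4, eventually_ge_atTop (2 * X)]
      with x h1 h2 h3
    refine (hk x h2 S hS (fun z hz => hX z ?_)).trans (by linarith)
    rw [abs_le] at hz
    linarith
  obtain ⟨Y0, hY0⟩ := eventually_atTop.1 k1
  set Y := max Y0 1 with hY
  have hYp : 1 ≤ Y := le_max_right _ _
  have hb := c.hb
  filter_upwards [k1, eventually_ge_atTop Y, eventually_ge_atTop (b * Y / (η/2))] with x h1 h2 h3
  have hxp : 0 < x := by linarith
  have hG : Gf γ κ x ≤ S + η := by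
    have t1 : ∫ y in (0:ℝ)..Y, gA γ κ y ≤ ∫ y in (0:ℝ)..Y, b :=
      intervalIntegral.integral_mono_on (by linarith) (c.kint _ _) (by simp) (fun y _ => c.k_le y)
    have t2 : ∫ y in Y..x, gA γ κ y ≤ ∫ y in Y..x, (S + η/2) :=
      intervalIntegral.integral_mono_on h2 (c.kint _ _) (by simp)
        (fun y hy => hY0 y ((le_max_left _ _).trans hy.1))
    simp only [intervalIntegral.integral_const, smul_eq_mul] at t1 t2
    have t3 := intervalIntegral.integral_add_adjacent_intervals (c.kint 0 Y) (c.kint Y x)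
    rw [Gf, one_div, inv_mul_eq_div, div_le_iff₀ hxp, ← t3]
    rw [div_le_iff₀ (by positivity)] at h3
    have : 0 ≤ Y * (S + η/2) := by positivity
    nlinarith
  rw [c.eqG hxp.ne']
  have p0 : 0 ≤ 1 / (N:ℝ) := by positivity
  have p1 : 1 / (N:ℝ) ≤ 1 := by rw [div_le_one] <;> linarith
  nlinarith

lemma D_tendsto (c : Core γ N b L e0 w ψ w' ψ' D κ) : Tendsto D atTop (nhds 0) := by
  set A : Set ℝ := {s | 0 < s ∧ ∀ᶠ x in atTop, D x ≤ s} with hA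
  have hAb : BddBelow A := ⟨0, fun s hs => hs.1.le⟩
  have hA1 : (e0 + b) / 2 ∈ A := by
    refine ⟨by linarith [c.he0, c.hb], ?_⟩
    have := c.step0 (S := e0) c.he0.le (Eventually.of_forall fun z => c.ψe _ (c.Dmem z))
      (η := (b - e0)/2) (by linarith [c.heb])
    refine this.mono fun x hx => hx.trans (le_of_eq (by ring))
  set s := sInf A with hs
  have hs0 : 0 ≤ s := le_csInf ⟨_, hA1⟩ fun t ht => ht.1.le
  have hsb : s < b := (csInf_le hAb hA1).trans_lt (by linarith [c.heb])
  have hs00 : s = 0 := by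
    by_contra hne
    have hsp : 0 < s := lt_of_le_of_ne hs0 (Ne.symm hne)
    have hm : s ∈ Ioo 0 b := ⟨hsp, hsb⟩
    have hlt := c.ψlt s hm
    set η := (s - ψ s) / 4 with hη
    have hηp : 0 < η := by linarith
    have hc : ∀ᶠ t in nhds s, ψ t < ψ s + η :=
      (c.dψ s hm).continuousAt.eventually (gt_mem_nhds (by linarith))
    obtain ⟨r, hr, hball⟩ := Metric.eventually_nhds_iff.1 hc
    obtain ⟨t, htA, ht⟩ := exists_lt_of_csInf_lt ⟨_, hA1⟩
      (show sInf A < min (s + r) b from lt_min (by linarith) hsb)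
    have hst : s ≤ t := csInf_le hAb htA
    have htb : t < b := ht.trans_le (min_le_right _ _)
    have htr : t < s + r := ht.trans_le (min_le_left _ _)
    have hψt : ψ t < ψ s + η := hball (by rw [Real.dist_eq, abs_of_nonneg] <;> linarith)
    have htm : t ∈ Ioo 0 b := ⟨htA.1, htb⟩
    have h1 := c.step0 (S := ψ t) (c.ψpos t htm)
      (htA.2.mono fun x hx => c.ψmono (c.Dmem x) htm hx) hηp
    have h2 : ψ t + η ∈ A := ⟨by linarith [c.ψpos t htm], h1⟩
    have := csInf_le hAb h2
    linarith
  rw [Metric.tendsto_nhds]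
  intro ε hε
  obtain ⟨t, htA, ht⟩ := exists_lt_of_csInf_lt ⟨_, hA1⟩
      (show sInf A < ε by rw [← hs, hs00]; exact hε)
  refine htA.2.mono fun x hx => ?_
  rw [Real.dist_eq, sub_zero, abs_of_pos (c.Dmem x).1]
  linarith
end Core

namespace Core
variable {γ : Measure ℝ} [IsProbabilityMeasure γ] {N : ℕ} {b L e0 : ℝ} {w ψ w' ψ' D κ : ℝ → ℝ}

lemma HG {x : ℝ} (hx : 0 < x) : ∫ y in (0:ℝ)..x, gA γ κ y = x * Gf γ κ x := by
  rw [Gf]; field_simp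

lemma H_mono (c : Core γ N b L e0 w ψ w' ψ' D κ) {x z : ℝ} (hx : 0 < x) (hxz : x ≤ z) :
    x * Gf γ κ x ≤ z * Gf γ κ z := by
  rw [← HG hx, ← HG (hx.trans_le hxz),
    ← intervalIntegral.integral_add_adjacent_intervals (c.kint 0 x) (c.kint x z)]
  have := intervalIntegral.integral_nonneg hxz (f := gA γ κ) (μ := volume)
      fun u _ => c.k_nonneg u
  linarith

lemma H_inc (c : Core γ N b L e0 w ψ w' ψ' D κ) {x z : ℝ} (hx : 0 < x) (hxz : x ≤ z) {Q : ℝ}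
    (hQ : ∀ y ∈ Icc x z, gA γ κ y ≤ Q) :
    z * Gf γ κ z ≤ x * Gf γ κ x + (z - x) * Q := by
  rw [← HG hx, ← HG (hx.trans_le hxz),
    ← intervalIntegral.integral_add_adjacent_intervals (c.kint 0 x) (c.kint x z)]
  have : ∫ y in x..z, gA γ κ y ≤ ∫ y in x..z, Q :=
    intervalIntegral.integral_mono_on hxz (c.kint _ _) (by simp) hQ
  simp only [intervalIntegral.integral_const, smul_eq_mul] at this
  linarith

lemma G_lower (c : Core γ N b L e0 w ψ w' ψ' D κ) :
    ∃ c1 > 0, ∀ x ≥ 1, c1 ≤ x * Gf γ κ x := by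
  obtain ⟨c1, h, h'⟩ := c.H_lower
  exact ⟨c1, h, fun x hx => by rw [← HG (by linarith)]; exact h' x hx⟩

lemma G_pos (c : Core γ N b L e0 w ψ w' ψ' D κ) {x : ℝ} (hx : 1 ≤ x) : 0 < Gf γ κ x := by
  obtain ⟨c1, h, h'⟩ := c.G_lower
  have := h.trans_le (h' x hx)
  exact pos_of_mul_pos_right this (by linarith)

lemma om_le {x z : ℝ} (hx : 0 < x) (hz : 0 < z) : x / z ≤ (max (x/z) (z/x))^2 := by
  rcases le_total x z with h | h
  · have h1 : x / z ≤ 1 := (div_le_one hz).2 h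
    have h2 : 1 ≤ max (x/z) (z/x) := le_max_of_le_right ((one_le_div hx).2 h)
    nlinarith
  · have h1 : 1 ≤ x / z := (one_le_div hz).2 h
    have h2 := le_max_left (x/z) (z/x)
    nlinarith

lemma om_one {x z : ℝ} (hx : 0 < x) (hz : 0 < z) : 1 ≤ (max (x/z) (z/x))^2 := by
  have : 1 ≤ max (x/z) (z/x) := by
    rcases le_total x z with h | h
    · exact le_max_of_le_right ((one_le_div hx).2 h)
    · exact le_max_of_le_left ((one_le_div hz).2 h)
  nlinarith

lemma om_window {x z z' : ℝ} (hx : 0 < x) (hz : 0 < z) (h : |z' - z| ≤ 1/20 * z) :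
    (max (x/z') (z'/x))^2 ≤ 10/9 * (max (x/z) (z/x))^2 := by
  rw [abs_le] at h
  have hz' : 0 < z' := by linarith
  have h1 : max (x/z') (z'/x) ≤ 20/19 * max (x/z) (z/x) := by
    apply max_le
    · have : x / z' ≤ 20/19 * (x/z) := by
        rw [← mul_div_assoc, div_le_div_iff₀ hz' hz]; nlinarith
      have := le_max_left (x/z) (z/x)
      linarith
    · have : z' / x ≤ 20/19 * (z/x) := by
        rw [← mul_div_assoc]; apply div_le_div_of_nonneg_right _ hx.le; linarith
      have := le_max_right (x/z) (z/x)
      linarith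
  have h0 : 0 ≤ max (x/z') (z'/x) := le_max_of_le_left (by positivity)
  have := pow_le_pow_left₀ h0 h1 2
  have : 0 ≤ (max (x/z) (z/x))^2 := by positivity
  nlinarith

lemma kG (c : Core γ N b L e0 w ψ w' ψ' D κ) :
    ∃ C ≥ 1, ∀ x ≥ 4, gA γ κ x ≤ C * Gf γ κ x := by
  obtain ⟨C, hC, hk⟩ := c.k_ub (by norm_num : (0:ℝ) < 1/20) (by norm_num)
  obtain ⟨c1, hc1, hG⟩ := c.G_lower
  have hN := c.Npos
  have hb := c.hb
  set p := 1 / (N:ℝ) with hp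
  have p0 : 0 < p := by positivity
  have p1 : p ≤ 1/2 := by apply one_div_le_one_div_of_le <;> linarith
  set A := 2 + (2 * C + 8 * b) / c1 with hA
  have hA2 : 2 ≤ A := by rw [hA]; linarith [show 0 ≤ (2 * C + 8 * b) / c1 by positivity]
  refine ⟨27/7 * A, by linarith, fun x hx => ?_⟩
  have hxp : 0 < x := by linarith
  have hGx := c.G_pos (x := x) (by linarith)
  set om : ℝ → ℝ := fun z => (max (x/z) (z/x))^2 with hom
  set T : Set ℝ := (fun z => gA γ κ z / om z) '' Ici 4 with hT
  have hom1 : ∀ z ≥ (4:ℝ), 1 ≤ om z := fun z hz => om_one hxp (by linarith)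
  have hTb : BddAbove T := by
    refine ⟨b, ?_⟩
    rintro _ ⟨z, hz, rfl⟩
    have h1 := hom1 z hz
    change gA γ κ z / om z ≤ b
    rw [div_le_iff₀ (by linarith)]
    have := c.k_le z
    nlinarith
  set Q := sSup T with hQ
  have hkQ : ∀ z ≥ (4:ℝ), gA γ κ z ≤ Q * om z := fun z hz => by
    rw [← div_le_iff₀ (by linarith [hom1 z hz])]
    exact le_csSup hTb ⟨z, hz, rfl⟩
  have omx : om x = 1 := by simp [hom, div_self hxp.ne']
  have hQ0 : 0 ≤ Q := by
    have := hkQ x hx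
    rw [omx, mul_one] at this
    exact (c.k_nonneg x).trans this
  have hGz : ∀ z ≥ (4:ℝ), Gf γ κ z ≤ om z * (Gf γ κ x + Q / 3) := by
    intro z hz
    have hzp : 0 < z := by linarith
    have hom0 := hom1 z hz
    rcases le_total z x with h | h
    · have h1 := c.H_mono hzp h
      have h2 : Gf γ κ z ≤ x / z * Gf γ κ x := by
        rw [div_mul_eq_mul_div, le_div_iff₀ hzp]; linarith
      have h3 : x / z ≤ om z := om_le hxp hzp
      have h4 := mul_le_mul_of_nonneg_right h3 hGx.le
      have : 0 ≤ om z * (Q / 3) := by positivity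
      linarith
    · have h1 : ∫ y in x..z, gA γ κ y ≤ ∫ y in x..z, (Q / x^2) * y^2 := by
        refine intervalIntegral.integral_mono_on h (c.kint _ _)
          (Continuous.intervalIntegrable (by fun_prop) _ _) (fun y hy => ?_)
        refine (hkQ y (by linarith [hy.1])).trans (le_of_eq ?_)
        have hyp : 0 < y := by linarith [hy.1]
        have : max (x/y) (y/x) = y/x := by
          apply max_eq_right
          have a1 : x / y ≤ 1 := (div_le_one hyp).2 hy.1
          have a2 : 1 ≤ y / x := (one_le_div hxp).2 hy.1
          linarith
        simp only [hom, this]; field_simp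
      rw [intervalIntegral.integral_const_mul, integral_pow] at h1
      norm_num at h1
      have h2 := HG (γ := γ) (κ := κ) hzp
      rw [← intervalIntegral.integral_add_adjacent_intervals (c.kint 0 x) (c.kint x z),
        HG hxp] at h2
      have h3 : z * Gf γ κ z ≤ z * (om z * (Gf γ κ x + Q / 3)) := by
        have a2 : 1 ≤ z / x := (one_le_div hxp).2 h
        have o1 : (z/x)^2 ≤ om z := by
          apply pow_le_pow_left₀ (by positivity) (le_max_right _ _)
        have e1 : Q / x^2 * ((z^3 - x^3)/3) ≤ z * ((z/x)^2 * (Q/3)) := by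
          have : z * ((z/x)^2 * (Q/3)) = Q / x^2 * (z^3/3) := by field_simp
          rw [this]; gcongr
          linarith [show 0 < x^3 by positivity]
        have e2 : z * ((z/x)^2 * (Q/3)) ≤ z * (om z * (Q/3)) := by gcongr
        have e3 : x * Gf γ κ x ≤ z * (om z * Gf γ κ x) := by
          calc _ ≤ z * (1 * Gf γ κ x) := by rw [one_mul]; gcongr
            _ ≤ _ := by gcongr
        rw [mul_add, mul_add]
        linarith
      exact le_of_mul_le_mul_left h3 hzp
  have hDz : ∀ z ≥ (4:ℝ), D z ≤ om z * (Gf γ κ x + 2/3 * Q) := by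
    intro z hz
    have hom0 := hom1 z hz
    rw [c.eqG (by linarith)]
    have h1 := mul_le_mul_of_nonneg_left (hkQ z hz) p0.le
    have h2 := mul_le_mul_of_nonneg_left (hGz z hz) (by linarith : 0 ≤ 1 - p)
    refine (add_le_add h1 h2).trans ?_
    have h3 : p * Q + (1 - p) * (Gf γ κ x + Q/3) ≤ Gf γ κ x + 2/3 * Q := by nlinarith
    have := mul_le_mul_of_nonneg_left h3 (by linarith : 0 ≤ om z)
    linarith
  have hfin : ∀ z ≥ (4:ℝ), gA γ κ z ≤ (20/27 * Q + A * Gf γ κ x) * om z := by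
    intro z hz
    have hzp : 0 < z := by linarith
    have hom0 := hom1 z hz
    have h3 : x / z ≤ om z := om_le hxp hzp
    have hGx1 := hG x (by linarith)
    -- c1 / z ≤ G x * om z
    have h4 : c1 / z ≤ Gf γ κ x * om z := by
      calc c1 / z ≤ x * Gf γ κ x / z := by gcongr
        _ = Gf γ κ x * (x / z) := by ring
        _ ≤ _ := by gcongr
    rcases le_total z 8 with h | h
    · have h5 : b ≤ 8 * b / c1 * (c1 / z) := by
        rw [show 8 * b / c1 * (c1 / z) = 8 * b / z by field_simp, le_div_iff₀ hzp]; nlinarith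
      have h6 : 8 * b / c1 ≤ A := by
        rw [hA, add_div]; linarith [show 0 ≤ 2 * C / c1 by positivity]
      have h7 : 8 * b / c1 * (c1 / z) ≤ A * (Gf γ κ x * om z) := by
        apply mul_le_mul h6 h4 (by positivity) (by linarith)
      have h8 : 0 ≤ 20/27 * Q * om z := by positivity
      have := c.k_le z
      linarith
    · have h5 := hk z hz (10/9 * om z * (Gf γ κ x + 2/3 * Q)) (by positivity) (by
        intro z' hz'
        have h6 := om_window (x := x) hxp hzp hz'
        rw [abs_le] at hz'
        have h7 := hDz z' (by linarith)
        refine (c.ψlt _ (c.Dmem z')).le.trans (h7.trans ?_)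
        exact mul_le_mul_of_nonneg_right h6 (by positivity))
      have h6 : Real.exp (-(z/2)) ≤ 2 / z := by
        rw [Real.exp_neg, inv_le_comm₀ (Real.exp_pos _) (by positivity), inv_div]
        linarith [Real.add_one_le_exp (z/2)]
      have h7 : C * Real.exp (-(z/2)) ≤ 2 * C / c1 * (c1 / z) := by
        rw [show 2 * C / c1 * (c1 / z) = C * (2 / z) by field_simp]
        exact mul_le_mul_of_nonneg_left h6 hC
      have h8 : 10/9 + 2 * C / c1 ≤ A := by
        rw [hA, add_div]; linarith [show 0 ≤ 8 * b / c1 by positivity]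
      have h9 : 2 * C / c1 * (c1 / z) ≤ 2 * C / c1 * (Gf γ κ x * om z) := by gcongr
      have h10 := mul_le_mul_of_nonneg_right h8 (by positivity : 0 ≤ Gf γ κ x * om z)
      nlinarith
  have hQf : Q ≤ 20/27 * Q + A * Gf γ κ x := by
    refine csSup_le ⟨_, ⟨4, by simp, rfl⟩⟩ ?_
    rintro _ ⟨z, hz, rfl⟩
    change gA γ κ z / om z ≤ _
    rw [div_le_iff₀ (by linarith [hom1 z hz])]
    exact hfin z hz
  have := hkQ x hx
  rw [omx, mul_one] at this
  linarith

lemma G_slow (c : Core γ N b L e0 w ψ w' ψ' D κ) :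
    ∃ C ≥ 1, ∀ ε, 0 < ε → ε ≤ 1 / (4 * C) → ∀ x ≥ 8, ∀ z, |z - x| ≤ ε * x →
      (1 - 2 * C * ε) * Gf γ κ x ≤ Gf γ κ z ∧ Gf γ κ z ≤ (1 + 2 * C * ε) * Gf γ κ x := by
  obtain ⟨C, hC, hk⟩ := c.kG
  refine ⟨C, hC, fun ε hε hεC x hx z hz => ?_⟩
  have hCε : C * ε ≤ 1/4 := by
    calc C * ε ≤ C * (1 / (4 * C)) := by gcongr
      _ = 1/4 := by field_simp
  have hε4 : ε ≤ 1/4 := by nlinarith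
  rw [abs_le] at hz
  have hxp : 0 < x := by linarith
  have hz2 : x / 2 ≤ z := by nlinarith
  have hzp : 0 < z := by linarith
  have hGx := c.G_pos (x := x) (by linarith)
  have hGz := c.G_pos (x := z) (by linarith)
  set g := Gf γ κ x
  set h := Gf γ κ z
  rcases le_total x z with hxz | hxz
  · have m1 : x * g ≤ z * h := c.H_mono hxp hxz
    have m2 : z * h ≤ x * g + (z - x) * (C * (z * h / x)) := by
      refine c.H_inc hxp hxz (fun y hy => ?_)
      have hyp : 0 < y := by linarith [hy.1]
      refine (hk y (by linarith [hy.1])).trans ?_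
      have h1 := c.H_mono hyp hy.2
      refine mul_le_mul_of_nonneg_left ?_ (by linarith)
      have h2 : Gf γ κ y ≤ z * h / y := by rw [le_div_iff₀ hyp]; linarith
      refine h2.trans ?_
      have : 0 ≤ z * h := by positivity
      gcongr; exact hy.1
    have m3 : (z - x) * (C * (z * h / x)) ≤ C * ε * (z * h) := by
      calc _ ≤ (ε * x) * (C * (z * h / x)) := by gcongr; linarith
        _ = _ := by field_simp
    -- z h (1 - Cε) ≤ x g
    have hzle : z ≤ (1 + ε) * x := by linarith
    constructor
    · have e1 : (1 - 2 * C * ε) * g * z ≤ h * z := by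
        have a1 : (1 - 2 * C * ε) * z ≤ x := by
          calc (1 - 2 * C * ε) * z ≤ (1 - 2 * C * ε) * ((1 + ε) * x) := by
                apply mul_le_mul_of_nonneg_left hzle; nlinarith
            _ = ((1 - 2 * C * ε) * (1 + ε)) * x := by ring
            _ ≤ 1 * x := by
                apply mul_le_mul_of_nonneg_right _ hxp.le
                have u1 : ε ≤ C * ε := by nlinarith
                have u2 : 0 ≤ C * ε * ε := by positivity
                nlinarith
            _ = x := one_mul x
        nlinarith
      exact le_of_mul_le_mul_right e1 hzp
    · have e1 : h * x ≤ (1 + 2 * C * ε) * g * x := by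
        have a0 : z * h * (1 - C * ε) ≤ x * g := by linarith
        have a1 : x * h ≤ z * h := by gcongr
        have a2 : (1 + 2 * C * ε) * (1 - C * ε) ≥ 1 := by
          have : 0 ≤ C * ε := by positivity
          nlinarith
        have a3 : 0 ≤ 1 + 2 * C * ε := by positivity
        have a4 := mul_le_mul_of_nonneg_left a0 a3
        have a5 : z * h ≤ z * h * ((1 + 2 * C * ε) * (1 - C * ε)) :=
          le_mul_of_one_le_right (by positivity) a2
        linarith
      exact le_of_mul_le_mul_right e1 hxp
  · have m1 : z * h ≤ x * g := c.H_mono hzp hxz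
    have m2 : x * g ≤ z * h + (x - z) * (C * (x * g / z)) := by
      refine c.H_inc hzp hxz (fun y hy => ?_)
      have hyp : 0 < y := by linarith [hy.1]
      refine (hk y (by linarith [hy.1])).trans ?_
      have h1 := c.H_mono hyp hy.2
      refine mul_le_mul_of_nonneg_left ?_ (by linarith)
      have h2 : Gf γ κ y ≤ x * g / y := by rw [le_div_iff₀ hyp]; linarith
      refine h2.trans ?_
      have : 0 ≤ x * g := by positivity
      gcongr; exact hy.1
    have m3 : (x - z) * (C * (x * g / z)) ≤ 2 * C * ε * (x * g) := by
      have t1 : (x - z) / z ≤ 2 * ε := by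
        rw [div_le_iff₀ hzp]; nlinarith
      calc _ = ((x - z) / z) * (C * (x * g)) := by ring
        _ ≤ (2 * ε) * (C * (x * g)) := by gcongr
        _ = _ := by ring
    constructor
    · have e1 : (1 - 2 * C * ε) * g * x ≤ h * x := by
        have : z * h ≤ x * h := by gcongr
        linarith
      exact le_of_mul_le_mul_right e1 hxp
    · have e1 : h * z ≤ (1 + 2 * C * ε) * g * z := by
        have a1 : x ≤ (1 + 2 * C * ε) * z := by
          have hz1 : (1 - ε) * x ≤ z := by linarith
          have : (1 + 2 * C * ε) * (1 - ε) ≥ 1 := by nlinarith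
          calc x = 1 * x := (one_mul x).symm
            _ ≤ ((1 + 2 * C * ε) * (1 - ε)) * x := by gcongr
            _ = (1 + 2 * C * ε) * ((1 - ε) * x) := by ring
            _ ≤ _ := by gcongr
        have := mul_le_mul_of_nonneg_right a1 hGx.le
        linarith
      exact le_of_mul_le_mul_right e1 hzp
end Core

lemma contract_tendsto {f : ℝ → ℝ} {e1 : ℝ} (h0 : ∀ᶠ x in atTop, |f x| ≤ e1) (he : 0 ≤ e1)
    (h : ∀ e ≥ 0, (∀ᶠ x in atTop, |f x| ≤ e) → ∀ η > 0, ∀ᶠ x in atTop, |f x| ≤ e / 2 + η) :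
    Tendsto f atTop (nhds 0) := by
  have key : ∀ η > 0, ∀ n : ℕ, ∀ᶠ x in atTop, |f x| ≤ e1 * (1/2)^n + 2 * η := by
    intro η hη n
    induction n with
    | zero => refine h0.mono fun x hx => ?_
              simp only [pow_zero, mul_one]; linarith
    | succ n ih =>
      refine (h _ (by positivity) ih η hη).mono fun x hx => hx.trans (le_of_eq ?_)
      rw [pow_succ]; ring
  rw [Metric.tendsto_nhds]
  intro ε hε
  have t : Tendsto (fun n : ℕ => e1 * (1/2:ℝ)^n) atTop (nhds (e1 * 0)) :=
    (tendsto_pow_atTop_nhds_zero_of_lt_one (by norm_num) (by norm_num)).const_mul _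
  rw [mul_zero] at t
  obtain ⟨n, hn⟩ := (t.eventually (gt_mem_nhds (half_pos hε))).exists
  refine (key (ε/8) (by positivity) n).mono fun x hx => ?_
  rw [Real.dist_eq, sub_zero]; linarith

namespace Core
variable {γ : Measure ℝ} [IsProbabilityMeasure γ] {N : ℕ} {b L e0 : ℝ} {w ψ w' ψ' D κ : ℝ → ℝ}

lemma exp_small_G (c : Core γ N b L e0 w ψ w' ψ' D κ) (C : ℝ) {η : ℝ} (hη : 0 < η) :
    ∀ᶠ x : ℝ in atTop, C * Real.exp (-(x/2)) ≤ η * Gf γ κ x := by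
  obtain ⟨c1, hc1, hG⟩ := c.G_lower
  have : Tendsto (fun x : ℝ => (2 * C) * ((x/2)^1 * Real.exp (-(x/2)))) atTop
      (nhds ((2 * C) * 0)) := by
    apply Tendsto.const_mul
    exact (Real.tendsto_pow_mul_exp_neg_atTop_nhds_zero 1).comp
      (tendsto_id.atTop_div_const (by norm_num : (0:ℝ) < 2))
  rw [mul_zero] at this
  filter_upwards [this.eventually (gt_mem_nhds (show 0 < η * c1 by positivity)),
    eventually_ge_atTop 1] with x hx hx1
  have h1 := mul_le_mul_of_nonneg_left (hG x hx1) hη.le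
  have h2 : x * (C * Real.exp (-(x/2))) ≤ x * (η * Gf γ κ x) := by
    rw [pow_one] at hx; nlinarith
  exact le_of_mul_le_mul_left h2 (by linarith)

set_option maxHeartbeats 4000000 in
lemma ratio_step (c : Core γ N b L e0 w ψ w' ψ' D κ) {p lam mu : ℝ} (hp : p = 1 / (N:ℝ))
    (hmu : mu = p * lam + 1 - p) (hlam : lam = L * mu) (hmu1 : mu ≤ 1) (hmu0 : 0 ≤ mu)
    {e : ℝ} (he : 0 ≤ e)
    (h : ∀ᶠ x in atTop, |gA γ κ x / Gf γ κ x - lam| ≤ e) {η : ℝ} (hη : 0 < η) :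
    ∀ᶠ x in atTop, |gA γ κ x / Gf γ κ x - lam| ≤ e / 2 + η := by
  have hN := c.Npos
  have p0 : 0 < p := by rw [hp]; positivity
  have p1 : p ≤ 1/2 := by rw [hp]; apply one_div_le_one_div_of_le <;> linarith
  have hL0 := c.L_nonneg
  have hL1 := c.L_le_one
  obtain ⟨C, hC, hslow⟩ := c.G_slow
  set B := 1 + e with hB
  set δ := min (1/2) (η / (3 * B + 1)) with hδ
  have hδ0 : 0 < δ := by rw [hδ]; positivity
  have hδ2 : δ ≤ 1/2 := min_le_left _ _
  have hδη : δ * (3 * B + 1) ≤ η := by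
    rw [← le_div_iff₀ (by positivity)]; exact min_le_right _ _
  set ε := δ / (2 * C) with hε
  have hε0 : 0 < ε := by positivity
  have hεC : ε ≤ 1 / (4 * C) := by
    rw [hε, div_le_div_iff₀ (by positivity) (by positivity)]; nlinarith
  have hε4 : ε ≤ 1/4 := hεC.trans (by apply one_div_le_one_div_of_le <;> linarith)
  have h2Cε : 2 * C * ε = δ := by rw [hε]; field_simp
  obtain ⟨C1, hC1, hub⟩ := c.k_ub hε0 (by linarith)
  obtain ⟨C2, hC2, hlb⟩ := c.k_lb hε0
  obtain ⟨d0, hd0, -, hd0b, has⟩ := c.asym hδ0 c.hb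
  have hDs : ∀ᶠ z in atTop, D z < d0 := c.D_tendsto.eventually (gt_mem_nhds hd0)
  obtain ⟨X, hX⟩ := eventually_atTop.1 (hDs.and h)
  filter_upwards [c.exp_small_G C1 hδ0, c.exp_small_G C2 hδ0, eventually_ge_atTop 8,
    eventually_ge_atTop (2 * X)] with x hx1 hx2 hx8 hxX
  have hGx := c.G_pos (x := x) (by linarith)
  have hwin : ∀ z, |z - x| ≤ ε * x → (|ψ (D z) - L * D z| ≤ δ * D z) ∧
      |gA γ κ z / Gf γ κ z - lam| ≤ e ∧ 0 < Gf γ κ z ∧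
      (1 - δ) * Gf γ κ x ≤ Gf γ κ z ∧ Gf γ κ z ≤ (1 + δ) * Gf γ κ x ∧
      D z = Gf γ κ z * (p * (gA γ κ z / Gf γ κ z) + (1 - p)) := by
    intro z hz
    have hs := hslow ε hε0 hεC x hx8 z hz
    rw [h2Cε] at hs
    rw [abs_le] at hz
    have hzX : x / 2 ≤ z := by nlinarith
    have hX' := hX z (by linarith)
    have hGz := c.G_pos (x := z) (by linarith)
    refine ⟨(has.2 (D z) ⟨(c.Dmem z).1, hX'.1.le⟩), hX'.2, hGz, hs.1, hs.2, ?_⟩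
    rw [c.eqG (by linarith), ← hp]; field_simp
  set g := Gf γ κ x with hg
  have hmupe : mu + p * e ≤ B := by rw [hB]; nlinarith
  have hmupe0 : 0 ≤ mu + p * e := by positivity
  have up : gA γ κ x / g ≤ lam + e / 2 + η := by
    rw [div_le_iff₀ hGx]
    have h1 := hub x (by linarith) ((L + δ) * ((1 + δ) * g * (mu + p * e))) (by positivity) (by
      intro z hz
      obtain ⟨a1, a2, a3, a4, a5, a6⟩ := hwin z hz
      rw [abs_le] at a1 a2
      have b1 : ψ (D z) ≤ (L + δ) * D z := by linarith
      refine b1.trans (mul_le_mul_of_nonneg_left ?_ (by linarith))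
      rw [a6]
      apply mul_le_mul a5 _ _ (by positivity)
      · have := mul_le_mul_of_nonneg_left a2.2 p0.le
        linarith
      · have : 0 ≤ gA γ κ z / Gf γ κ z := div_nonneg (c.k_nonneg z) a3.le
        have := mul_nonneg p0.le this
        linarith)
    have h2 : (L + δ) * (1 + δ) * (mu + p * e) + δ ≤ lam + e/2 + η := by
      have q1 : (L + δ) * (1 + δ) ≤ L + 3 * δ := by nlinarith
      have q2 := mul_le_mul_of_nonneg_right q1 hmupe0
      have q3 : 3 * δ * (mu + p * e) ≤ 3 * δ * B := by gcongr
      have q4 : L * (p * e) ≤ 1 * (1/2 * e) := by gcongr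
      nlinarith
    have h3 := mul_le_mul_of_nonneg_right h2 hGx.le
    nlinarith
  have k0 : 0 ≤ gA γ κ x / g := div_nonneg (c.k_nonneg x) hGx.le
  have lo : lam - e / 2 - η ≤ gA γ κ x / g := by
    have hδη' : δ * 3 ≤ η := by nlinarith
    by_cases c1 : L ≤ δ
    · have : lam ≤ δ * 1 := by rw [hlam]; gcongr
      linarith
    by_cases c2 : mu ≤ p * e
    · have : lam ≤ 1 * (1/2 * e) := by
        rw [hlam]
        calc L * mu ≤ L * (p * e) := by gcongr
          _ ≤ _ := by gcongr
      linarith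
    push Not at c1 c2
    rw [le_div_iff₀ hGx]
    set S := (L - δ) * ((1 - δ) * g * (mu - p * e)) with hS
    have hSz : ∀ z, |z - x| ≤ ε * x → S ≤ ψ (D z) := by
      intro z hz
      obtain ⟨a1, a2, a3, a4, a5, a6⟩ := hwin z hz
      rw [abs_le] at a1 a2
      have b1 : (L - δ) * D z ≤ ψ (D z) := by linarith
      refine le_trans (mul_le_mul_of_nonneg_left ?_ (by linarith)) b1
      rw [a6]
      apply mul_le_mul a4 _ (by linarith) a3.le
      have := mul_le_mul_of_nonneg_left a2.1 p0.le
      linarith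
    have h1 := hlb x (by linarith) S ((hSz x (by
      rw [sub_self, abs_zero]; exact mul_nonneg hε0.le (by linarith))).trans
      ((le_abs_self _).trans (c.ψD_abs x))) hSz
    have h2 : lam - e/2 - η ≤ (L - δ) * (1 - δ) * (mu - p * e) - δ := by
      have q1 : L - 2 * δ ≤ (L - δ) * (1 - δ) := by nlinarith
      have q2 := mul_le_mul_of_nonneg_right q1 (by linarith : 0 ≤ mu - p * e)
      have q3 : 2 * δ * (mu - p * e) ≤ 2 * δ * 1 := by
        have : 0 ≤ p * e := by positivity
        gcongr; linarith
      have q4 : L * (p * e) ≤ 1 * (1/2 * e) := by gcongr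
      nlinarith
    have h3 := mul_le_mul_of_nonneg_right h2 hGx.le
    nlinarith
  rw [abs_le]
  constructor <;> linarith

lemma ratio_lim (c : Core γ N b L e0 w ψ w' ψ' D κ) :
    Tendsto (fun x => Gf γ κ x / D x) atTop
      (nhds ((N:ℝ) / ((N:ℝ) + (L - 1) / (1 - L / (N:ℝ))))) := by
  have hN := c.Npos
  have hL0 := c.L_nonneg
  have hL1 := c.L_le_one
  set p := 1 / (N:ℝ) with hp
  have p0 : 0 < p := by rw [hp]; positivity
  have p1 : p ≤ 1/2 := by rw [hp]; apply one_div_le_one_div_of_le <;> linarith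
  have hLp : L * p ≤ 1/2 := by nlinarith
  have hLp' : 1 - L * p ≠ 0 := by linarith
  set mu := (1 - p) / (1 - L * p) with hmu
  have hmu0 : 0 < mu := div_pos (by linarith) (by linarith)
  have hmu1 : mu ≤ 1 := by rw [hmu, div_le_one (by linarith)]; nlinarith
  have hmue : mu = p * (L * mu) + 1 - p := by
    have : mu * (1 - L * p) = 1 - p := div_mul_cancel₀ _ hLp'
    linarith
  have hlam0 : 0 ≤ L * mu := by positivity
  have hlam1 : L * mu ≤ 1 := by nlinarith
  obtain ⟨C, hC, hk⟩ := c.kG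
  have t := contract_tendsto (f := fun x => gA γ κ x / Gf γ κ x - L * mu) (e1 := C + 1) (by
    filter_upwards [eventually_ge_atTop 4] with x hx
    have hGx := c.G_pos (x := x) (by linarith)
    have k0 : 0 ≤ gA γ κ x / Gf γ κ x := div_nonneg (c.k_nonneg x) hGx.le
    have k1 : gA γ κ x / Gf γ κ x ≤ C := (div_le_iff₀ hGx).2 (hk x hx)
    rw [abs_le]; constructor <;> linarith) (by linarith)
    (fun e he h η hη => c.ratio_step hp hmue rfl hmu1 hmu0.le he h hη)
  have t2 : Tendsto (fun x => gA γ κ x / Gf γ κ x) atTop (nhds (L * mu)) := by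
    have := t.add_const (L * mu)
    simpa using this
  have t3 : Tendsto (fun x => 1 / (p * (gA γ κ x / Gf γ κ x) + (1 - p))) atTop
      (nhds (1 / (p * (L * mu) + (1 - p)))) :=
    ((tendsto_const_nhds).div ((t2.const_mul p).add_const (1 - p)) (by linarith))
  have e1 : 1 / (p * (L * mu) + (1 - p)) = (N:ℝ) / ((N:ℝ) + (L - 1) / (1 - L / (N:ℝ))) := by
    have : p * (L * mu) + (1 - p) = mu := by linarith
    rw [this, hmu, hp]
    have n0 : (N:ℝ) ≠ 0 := by positivity
    have n1 : (N:ℝ) - L ≠ 0 := by linarith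
    have n2 : (N:ℝ) - 1 ≠ 0 := by linarith
    have s1 : 1 - L / (N:ℝ) = ((N:ℝ) - L) / N := by field_simp
    have s2 : 1 - L * (1 / (N:ℝ)) = ((N:ℝ) - L) / N := by field_simp
    have s3 : 1 - 1 / (N:ℝ) = ((N:ℝ) - 1) / N := by field_simp
    have s4 : (N:ℝ) + (L - 1) / (((N:ℝ) - L) / N) = (N:ℝ) * ((N:ℝ) - 1) / ((N:ℝ) - L) := by
      field_simp; ring
    rw [s1, s2, s3, s4]; field_simp
  rw [← e1]
  refine t3.congr' ?_
  filter_upwards [eventually_ge_atTop 4] with x hx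
  have hGx := c.G_pos (x := x) (by linarith)
  rw [c.eqG (by linarith), ← hp]
  have := c.k_nonneg x
  have h1 : 0 < p * gA γ κ x + (1 - p) * Gf γ κ x := by nlinarith
  have h2 : p * (gA γ κ x / Gf γ κ x) + (1 - p) = (p * gA γ κ x + (1 - p) * Gf γ κ x) / Gf γ κ x := by
    field_simp
  rw [h2, one_div_div]
end Core

structure Law (b e0 L : ℝ) (w U w' : ℝ → ℝ) : Prop where
  hb : 0 < b
  he0 : 0 < e0
  heb : e0 < b
  wmono : Monotone w
  Umono : Monotone U
  wpos : ∀ d ∈ Ioo 0 b, 0 < w d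
  wle : ∀ d, w d ≤ 1
  U0 : ∀ d, 0 ≤ U d
  Ult : ∀ d ∈ Ioo 0 b, U d < d * w d
  Ue : ∀ d, U d ≤ e0 * w d
  lo : ∀ d d', d ≤ d' → d * (w d' - w d) ≤ U d' - U d
  hi : ∀ d d', d ≤ d' → U d' - U d ≤ d' * (w d' - w d)
  dw : ∀ d ∈ Ioo 0 b, HasDerivAt w (w' d) d
  lim : Tendsto (fun d => w' d * (d - U d / w d) / w d) (nhdsWithin 0 (Ioi 0)) (nhds L)

namespace Law
variable {b e0 L : ℝ} {w U w' : ℝ → ℝ}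

lemma dU_aux (hmono : Monotone w)
    (lo : ∀ d d', d ≤ d' → d * (w d' - w d) ≤ U d' - U d)
    (hi : ∀ d d', d ≤ d' → U d' - U d ≤ d' * (w d' - w d)) {d v : ℝ} (hd : HasDerivAt w v d) :
    HasDerivAt U (d * v) d := by
  have h0 : HasDerivAt (fun t => U t - d * w t) 0 d := by
    rw [hasDerivAt_iff_isLittleO, Asymptotics.isLittleO_iff]
    intro c hc
    have := (Metric.tendsto_nhds.1 hd.continuousAt.tendsto) c hc
    filter_upwards [this] with t ht
    rw [Real.dist_eq] at ht
    simp only [smul_zero, sub_zero, Real.norm_eq_abs]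
    have key : |U t - d * w t - (U d - d * w d)| ≤ |w t - w d| * |t - d| := by
      rcases le_total d t with h | h
      · have h1 := lo d t h
        have h2 := hi d t h
        have h3 := hmono h
        rw [abs_of_nonneg (by linarith), abs_of_nonneg (by linarith), abs_of_nonneg (by linarith)]
        nlinarith
      · have h1 := lo t d h
        have h2 := hi t d h
        have h3 := hmono h
        rw [abs_of_nonneg (by linarith), abs_of_nonpos (by linarith), abs_of_nonpos (by linarith)]
        nlinarith
    exact key.trans (mul_le_mul_of_nonneg_right ht.le (abs_nonneg _))
  have := h0.add (hd.const_mul d)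
  simp only [zero_add] at this
  refine this.congr_of_eventuallyEq (Eventually.of_forall fun t => ?_)
  simp

lemma dψ_aux (hmono : Monotone w)
    (lo : ∀ d d', d ≤ d' → d * (w d' - w d) ≤ U d' - U d)
    (hi : ∀ d d', d ≤ d' → U d' - U d ≤ d' * (w d' - w d)) {d v : ℝ} (hd : HasDerivAt w v d)
    (hw : w d ≠ 0) :
    HasDerivAt (fun t => U t / w t) (v * (d - U d / w d) / w d) d := by
  have := (dU_aux hmono lo hi hd).div hd hw
  have e : v * (d - U d / w d) / w d = (d * v * w d - U d * v) / (w d)^2 := by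
    field_simp
  rw [e]; exact this

lemma toCore {γ : Measure ℝ} [IsProbabilityMeasure γ] {N : ℕ} {D κ : ℝ → ℝ}
    (l : Law b e0 L w U w') (hN : 2 ≤ N)
    (gexp : ∀ l : ℝ, Integrable (fun u => Real.exp (l * |u|)) γ)
    (gpos : ∀ s : Set ℝ, IsOpen s → s.Nonempty → 0 < γ s)
    (Dm : Measurable D) (Dmem : ∀ x, D x ∈ Ioo 0 b) (κm : Measurable κ)
    (κ0 : ∀ z, 0 ≤ κ z) (κb : ∀ z, κ z ≤ b)
    (κeq : ∀ z, 0 ≤ z → κ z * gA γ (fun y => w (D y)) z = gA γ (fun y => U (D y)) z)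
    (κneg : ∀ z < 0, e0 ≤ κ z)
    (kc : Continuous (gA γ κ))
    (eq : ∀ x, x ≠ 0 → D x = (1 / (N:ℝ)) * gA γ κ x
      + (((N:ℝ) - 1) / (N:ℝ)) * ((1 / x) * ∫ y in (0:ℝ)..x, gA γ κ y)) :
    Core γ N b L e0 w (fun d => U d / w d) w' (fun d => w' d * (d - U d / w d) / w d) D κ where
  hN := hN
  hb := l.hb
  he0 := l.he0
  heb := l.heb
  gexp := gexp
  gpos := gpos
  wm := l.wmono.measurable
  ψm := l.Umono.measurable.div l.wmono.measurable
  wpos := l.wpos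
  wle := fun d _ => l.wle d
  wmono := l.wmono.monotoneOn _
  ψpos := fun d hd => div_nonneg (l.U0 d) (l.wpos d hd).le
  ψlt := fun d hd => (div_lt_iff₀ (l.wpos d hd)).2 (l.Ult d hd)
  ψe := fun d hd => (div_le_iff₀ (l.wpos d hd)).2 (l.Ue d)
  ψmono := by
    intro d hd d' hd' h
    have h1 := l.wpos d hd
    have h2 := l.wpos d' hd'
    have h3 := l.lo d d' h
    have h4 := (l.Ult d hd).le
    have h5 := sub_nonneg.2 (l.wmono h)
    change U d / w d ≤ U d' / w d'
    rw [div_le_div_iff₀ h1 h2]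
    have h6 := mul_le_mul_of_nonneg_right h3 h1.le
    have h7 := mul_le_mul_of_nonneg_right h4 h5
    nlinarith
  dw := l.dw
  dψ := fun d hd => dψ_aux l.wmono l.lo l.hi (l.dw d hd) (l.wpos d hd).ne'
  rel := fun d hd => div_mul_cancel₀ _ (l.wpos d hd).ne'
  lim := l.lim
  Dm := Dm
  Dmem := Dmem
  κm := κm
  κ0 := κ0
  κb := κb
  κeq := fun z hz => by
    rw [κeq z hz]
    congr 1
    ext y
    exact (div_mul_cancel₀ _ (l.wpos _ (Dmem y)).ne').symm
  κneg := κneg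
  kc := kc
  eq := eq

end Law

section lawOf
variable {Ω : Type*} [MeasurableSpace Ω] {P : Measure Ω} [IsProbabilityMeasure P]
  {X : Ω → ℝ} {A : ℝ → Set Ω} {b : ℝ}

lemma fam_diff (hX : Integrable X P) (hA : ∀ d, MeasurableSet (A d))
    (hle : ∀ d, ∀ ω ∈ A d, X ω ≤ d) (hge : ∀ d, ∀ ω, ω ∉ A d → d ≤ X ω)
    (hmono : Monotone A) {d d' : ℝ} (h : d ≤ d') :
    d * (P.real (A d') - P.real (A d)) ≤ (∫ ω in A d', X ω ∂P) - ∫ ω in A d, X ω ∂P ∧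
    (∫ ω in A d', X ω ∂P) - ∫ ω in A d, X ω ∂P ≤ d' * (P.real (A d') - P.real (A d)) := by
  have hsub := hmono h
  have e1 : (∫ ω in A d', X ω ∂P) - ∫ ω in A d, X ω ∂P = ∫ ω in A d' \ A d, X ω ∂P :=
    (setIntegral_sdiff (hA d) hX.integrableOn hsub).symm
  have e2 : P.real (A d') - P.real (A d) = P.real (A d' \ A d) :=
    (measureReal_sdiff hsub (hA d)).symm
  have hm : MeasurableSet (A d' \ A d) := (hA d').diff (hA d)
  rw [e1, e2]
  constructor
  · have := setIntegral_mono_on (μ := P) (f := fun _ => d) (g := X) (integrable_const _).integrableOn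
      hX.integrableOn hm (fun ω hω => hge d ω hω.2)
    simpa [mul_comm] using this
  · have := setIntegral_mono_on (μ := P) (f := X) (g := fun _ => d') hX.integrableOn
      (integrable_const _).integrableOn hm (fun ω hω => hle d' ω hω.1)
    simpa [mul_comm] using this

lemma lawOf (hX : Integrable X P) (hA : ∀ d, MeasurableSet (A d))
    (hle : ∀ d, ∀ ω ∈ A d, X ω ≤ d) (hge : ∀ d, ∀ ω, ω ∉ A d → d ≤ X ω)
    (hmono : Monotone A) (hb : 0 < b) (hX0 : ∀ᵐ ω ∂P, 0 ≤ X ω) (hXb : ∀ᵐ ω ∂P, X ω ≤ b)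
    (hpos : ∀ d > 0, 0 < P (A d)) (hpos' : ∀ d < b, 0 < P (A d)ᶜ) {w' : ℝ → ℝ} {L : ℝ}
    (dw : ∀ d ∈ Ioo 0 b, HasDerivAt (fun d => P.real (A d)) (w' d) d)
    (lim : Tendsto (fun d => w' d * (d - (∫ ω in A d, X ω ∂P) / P.real (A d)) / P.real (A d))
      (nhdsWithin 0 (Ioi 0)) (nhds L)) :
    Law b (∫ ω, X ω ∂P) L (fun d => P.real (A d)) (fun d => ∫ ω in A d, X ω ∂P) w' := by
  have wmono : Monotone (fun d => P.real (A d)) := fun d d' h =>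
    measureReal_mono (hmono h)
  have wpos : ∀ d > 0, 0 < P.real (A d) := fun d hd =>
    ENNReal.toReal_pos (hpos d hd).ne' (measure_ne_top _ _)
  have U0 : ∀ d, 0 ≤ ∫ ω in A d, X ω ∂P := fun d =>
    integral_nonneg_of_ae (ae_restrict_of_ae hX0)
  have wc : ∀ d, P.real (A d)ᶜ = 1 - P.real (A d) := fun d => probReal_compl_eq_one_sub (hA d)
  have wlt : ∀ d < b, P.real (A d) < 1 := fun d hd => by
    have : 0 < P.real (A d)ᶜ := ENNReal.toReal_pos (hpos' d hd).ne' (measure_ne_top _ _)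
    rw [wc] at this; linarith
  have split : ∀ d, (∫ ω in A d, X ω ∂P) + ∫ ω in (A d)ᶜ, X ω ∂P = ∫ ω, X ω ∂P := fun d =>
    integral_add_compl (hA d) hX
  have Ule : ∀ d, ∫ ω in A d, X ω ∂P ≤ d * P.real (A d) := fun d => by
    have := setIntegral_mono_on (μ := P) (f := X) (g := fun _ => d) hX.integrableOn
      (integrable_const _).integrableOn (hA d) (fun ω hω => hle d ω hω)
    simpa [mul_comm] using this
  have Rge : ∀ d, d * (1 - P.real (A d)) ≤ ∫ ω in (A d)ᶜ, X ω ∂P := fun d => by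
    have := setIntegral_mono_on (μ := P) (f := fun _ => d) (g := X) (integrable_const _).integrableOn
      hX.integrableOn (hA d).compl (fun ω hω => hge d ω hω)
    rw [← wc]
    simpa [mul_comm] using this
  have Rle : ∀ d, ∫ ω in (A d)ᶜ, X ω ∂P ≤ b * (1 - P.real (A d)) := fun d => by
    have := setIntegral_mono_ae (μ := P) (s := (A d)ᶜ) (f := X) (g := fun _ => b) hX.integrableOn
      (integrable_const _).integrableOn hXb
    rw [← wc]
    simpa [mul_comm] using this
  refine ⟨hb, ?_, ?_, wmono, ?_, fun d hd => wpos d hd.1, fun d => measureReal_le_one, U0, ?_, ?_,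
    fun d d' h => (fam_diff hX hA hle hge hmono h).1,
    fun d d' h => (fam_diff hX hA hle hge hmono h).2, dw, lim⟩
  · have h1 := split (b/2)
    have h2 := Rge (b/2)
    have h3 := U0 (b/2)
    have h4 := wlt (b/2) (by linarith)
    nlinarith
  · have h1 := split (b/2)
    have h2 := Rle (b/2)
    have h3 := Ule (b/2)
    have h4 := wpos (b/2) (by linarith)
    nlinarith
  · intro d d' h
    exact setIntegral_mono_set hX.integrableOn (ae_restrict_of_ae hX0)
      (Eventually.of_forall (hmono h))
  · intro d hd
    have h1 := Ule (d/2)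
    have h2 := (fam_diff hX hA hle hge hmono (show d/2 ≤ d by linarith [hd.1])).2
    have h3 := wpos (d/2) (by linarith [hd.1])
    have := hd.1
    change ∫ ω in A d, X ω ∂P < d * P.real (A d)
    nlinarith
  · intro d
    have h1 := split d
    have h2 := Ule d
    have h3 := Rge d
    have h4 : 0 ≤ P.real (A d) := measureReal_nonneg
    have h5 : 0 ≤ 1 - P.real (A d) := by rw [← wc]; exact measureReal_nonneg
    have h6 := mul_le_mul_of_nonneg_right h3 h4
    have h7 := mul_le_mul_of_nonneg_right h2 h5
    change ∫ ω in A d, X ω ∂P ≤ (∫ ω, X ω ∂P) * P.real (A d)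
    nlinarith
end lawOf

noncomputable def gvar (σ : ℝ) : NNReal := Real.toNNReal (σ ^ 2)

lemma gvar_coe (σ : ℝ) : ((gvar σ : NNReal) : ℝ) = σ ^ 2 := Real.coe_toNNReal _ (sq_nonneg σ)

noncomputable def gmv (σ : ℝ) : Measure ℝ :=
  ProbabilityTheory.gaussianReal 0 (gvar σ)

instance gmv_prob (σ : ℝ) : IsProbabilityMeasure (gmv σ) := by
  unfold gmv; infer_instance

lemma gmv_var {σ : ℝ} (hσ : 0 < σ) : gvar σ ≠ 0 := by
  intro h
  have : σ ^ 2 = 0 := by rw [← gvar_coe, h]; rfl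
  exact (pow_pos hσ 2).ne' this

lemma gq_eq_pdf {σ : ℝ} (hσ : 0 < σ) (u : ℝ) :
    ProbabilityTheory.gaussianPDFReal 0 (gvar σ) u = gq σ u := by
  unfold ProbabilityTheory.gaussianPDFReal gq
  have : Real.sqrt (2 * Real.pi * σ ^ 2) = σ * Real.sqrt (2 * Real.pi) := by
    rw [Real.sqrt_mul (by positivity), Real.sqrt_sq hσ.le, mul_comm]
  simp only [gvar_coe, sub_zero, this]
  exact (div_eq_inv_mul _ _).symm

lemma gq_even (σ u : ℝ) : gq σ (-u) = gq σ u := by simp [gq]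

lemma gq_pos {σ : ℝ} (hσ : 0 < σ) (u : ℝ) : 0 < gq σ u := by
  unfold gq; positivity

lemma gq_cont (σ : ℝ) : Continuous (gq σ) := by
  unfold gq; fun_prop

lemma gq_integrable {σ : ℝ} (hσ : 0 < σ) : Integrable (gq σ) := by
  have := ProbabilityTheory.integrable_gaussianPDFReal 0 (gvar σ)
  exact this.congr (Eventually.of_forall fun u => gq_eq_pdf hσ u)

lemma gq_integrable_sub {σ : ℝ} (hσ : 0 < σ) (x : ℝ) : Integrable (fun z => gq σ (x - z)) :=
  (gq_integrable hσ).comp_sub_left x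

lemma gq_integral {σ : ℝ} (hσ : 0 < σ) : ∫ z, gq σ z = 1 := by
  rw [← ProbabilityTheory.integral_gaussianPDFReal_eq_one 0 (gmv_var hσ)]
  exact integral_congr_ae (Eventually.of_forall fun u => (gq_eq_pdf hσ u).symm)

lemma gA_gq {σ : ℝ} (hσ : 0 < σ) (f : ℝ → ℝ) (x : ℝ) :
    gA (gmv σ) f x = ∫ z, f z * gq σ (x - z) := by
  unfold gA gmv
  rw [ProbabilityTheory.integral_gaussianReal_eq_integral_smul (gmv_var hσ),
    ← integral_add_left_eq_self (fun z => f z * gq σ (x - z)) x]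
  congr 1
  ext u
  rw [gq_eq_pdf hσ, smul_eq_mul, mul_comm, show x - (x + u) = -u by ring, gq_even]

lemma gmv_exp (σ l : ℝ) : Integrable (fun u => Real.exp (l * |u|)) (gmv σ) := by
  have h1 := ProbabilityTheory.integrable_exp_mul_gaussianReal (μ := 0) (v := gvar σ) l
  have h2 := ProbabilityTheory.integrable_exp_mul_gaussianReal (μ := 0) (v := gvar σ) (-l)
  refine (h1.add h2).mono' (by fun_prop) (Eventually.of_forall fun u => ?_)
  rw [Real.norm_eq_abs, abs_of_pos (Real.exp_pos _)]
  simp only [Pi.add_apply]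
  rcases abs_cases u with ⟨h, _⟩ | ⟨h, _⟩ <;> rw [h]
  · linarith [Real.exp_pos (-l * u)]
  · rw [show l * -u = -l * u by ring]; linarith [Real.exp_pos (l * u)]

lemma gmv_open {σ : ℝ} (hσ : 0 < σ) (s : Set ℝ) (hs : IsOpen s) (hn : s.Nonempty) : 0 < gmv σ s := by
  rw [pos_iff_ne_zero]
  intro h
  have := ProbabilityTheory.gaussianReal_absolutelyContinuous' 0 (gmv_var hσ) h
  exact (hs.measure_pos volume hn).ne' this

lemma gA_neg {σ : ℝ} (hσ : 0 < σ) (f : ℝ → ℝ) (x : ℝ) :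
    gA (gmv σ) (fun y => f (-y)) x = gA (gmv σ) f (-x) := by
  rw [gA_gq hσ, gA_gq hσ, ← integral_neg_eq_self]
  congr 1; ext z
  rw [neg_neg, show -x - z = -(x - -z) by ring, gq_even]

lemma gA_cont {σ : ℝ} (hσ : 0 < σ) (f : ℝ → ℝ) {C : ℝ} (hC : ∀ z, |f z| ≤ C) :
    Continuous (gA (gmv σ) f) := by
  have e : gA (gmv σ) f = fun x => ∫ z, f z * gq σ (x - z) := funext fun x => gA_gq hσ f x
  rw [e]
  by_cases hf : AEStronglyMeasurable f volume
  · have hC0 : 0 ≤ C := (abs_nonneg _).trans (hC 0)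
    rw [continuous_iff_continuousAt]
    intro x0
    set c : ℝ := 1 / (σ * Real.sqrt (2 * Real.pi)) with hc
    have hc0 : 0 < c := by positivity
    let bd : ℝ → ℝ := fun z => C * (c * (Real.exp (1 / (2 * σ ^ 2)) *
      Real.exp (-(1 / (4 * σ ^ 2)) * (z - x0) ^ 2)))
    refine continuousAt_of_dominated (bound := bd) ?_ ?_ ?_ ?_
    · exact Eventually.of_forall fun x => hf.mul
        ((gq_cont σ).comp (by fun_prop : Continuous fun z => x - z)).aestronglyMeasurable
    · filter_upwards [Metric.ball_mem_nhds x0 one_pos] with x hx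
      refine Eventually.of_forall fun z => ?_
      rw [norm_mul, Real.norm_eq_abs, Real.norm_eq_abs, abs_of_pos (gq_pos hσ _)]
      refine mul_le_mul (hC z) ?_ (gq_pos hσ _).le hC0
      unfold gq
      rw [div_eq_inv_mul, hc, one_div]
      refine mul_le_mul_of_nonneg_left ?_ (by positivity)
      rw [← Real.exp_add]
      apply Real.exp_le_exp.2
      rw [Metric.mem_ball, Real.dist_eq] at hx
      have h1 : (x - x0) ^ 2 ≤ 1 := by
        rw [← sq_abs]; nlinarith [abs_nonneg (x - x0)]
      have h2 : (z - x0)^2 / 2 - 1 ≤ (x - z)^2 := by nlinarith [sq_nonneg ((x - z) + (x-z) + (z - x0))]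
      rw [show 1 / (2 * σ ^ 2) + -(1 / (4 * σ ^ 2)) * (z - x0) ^ 2
        = -((z - x0)^2 / 2 - 1) / (2 * σ ^ 2) by field_simp; ring]
      gcongr
    · have := (integrable_exp_neg_mul_sq (b := 1 / (4 * σ ^ 2)) (by positivity)).comp_sub_right x0
      exact ((this.const_mul _).const_mul _).const_mul _
    · exact Eventually.of_forall fun z =>
        (continuous_const.mul ((gq_cont σ).comp (by fun_prop : Continuous fun x => x - z))).continuousAt
  · have : (fun x => ∫ z, f z * gq σ (x - z)) = fun _ => 0 := by
      ext x
      apply integral_non_aestronglyMeasurable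
      intro h
      apply hf
      have hg : Continuous fun z => (gq σ (x - z))⁻¹ :=
        ((gq_cont σ).comp (by fun_prop : Continuous fun z => x - z)).inv₀ fun z => (gq_pos hσ _).ne'
      have := h.mul hg.aestronglyMeasurable
      refine this.congr (Eventually.of_forall fun z => ?_)
      simp only [Pi.mul_apply]
      rw [mul_assoc, mul_inv_cancel₀ (gq_pos hσ _).ne', mul_one]
    rw [this]; exact continuous_const

lemma gq_mul_integrable {σ : ℝ} (hσ : 0 < σ) {f : ℝ → ℝ} (hf : AEStronglyMeasurable f volume) {C : ℝ}
    (hC : ∀ z, |f z| ≤ C) (x : ℝ) : Integrable (fun z => f z * gq σ (x - z)) :=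
  (gq_integrable_sub hσ x).bdd_mul hf (Eventually.of_forall hC)

lemma ratio_meas {σ : ℝ} (hσ : 0 < σ) {A B : ℝ → ℝ} {K : ℝ} (hK : 0 ≤ K)
    (hA : ∀ z, |A z| ≤ K * B z) (hB : ∀ z, |B z| ≤ 1) :
    Measurable (fun x => (∫ z, A z * gq σ (x - z)) / ∫ z, B z * gq σ (x - z)) ∧
    ∀ x, |(∫ z, A z * gq σ (x - z)) / ∫ z, B z * gq σ (x - z)| ≤ K := by
  have hAK : ∀ z, |A z| ≤ K := fun z => (hA z).trans (by
    have := (le_abs_self _).trans (hB z); nlinarith)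
  constructor
  · have h1 := (gA_cont hσ A hAK).measurable
    have h2 := (gA_cont hσ B hB).measurable
    simp_rw [← gA_gq hσ]
    exact h1.div h2
  · intro x
    by_cases h1 : Integrable (fun z => A z * gq σ (x - z))
    swap
    · rw [integral_undef h1]; simpa using hK
    by_cases h2 : Integrable (fun z => B z * gq σ (x - z))
    swap
    · rw [integral_undef h2]; simpa using hK
    rw [abs_div]
    have h3 : |∫ z, A z * gq σ (x - z)| ≤ K * |∫ z, B z * gq σ (x - z)| := by
      calc |∫ z, A z * gq σ (x - z)| ≤ ∫ z, |A z * gq σ (x - z)| := abs_integral_le_integral_abs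
        _ ≤ ∫ z, K * (B z * gq σ (x - z)) := by
          refine integral_mono h1.abs (h2.const_mul K) fun z => ?_
          simp only
          rw [abs_mul, abs_of_pos (gq_pos hσ _), ← mul_assoc]
          exact mul_le_mul_of_nonneg_right (hA z) (gq_pos hσ _).le
        _ = K * ∫ z, B z * gq σ (x - z) := integral_const_mul _ _
        _ ≤ _ := mul_le_mul_of_nonneg_left (le_abs_self _) hK
    exact div_le_of_le_mul₀ (abs_nonneg _) hK h3

lemma ratio_eq {σ : ℝ} (hσ : 0 < σ) {A B : ℝ → ℝ} {lo hi : ℝ} (hAm : Measurable A) (hBm : Measurable B)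
    (hB0 : ∀ z, 0 < B z) (hB : ∀ z, B z ≤ 1)
    (hlo : ∀ z, lo * B z ≤ A z) (hhi : ∀ z, A z ≤ hi * B z) (x : ℝ) :
    (lo ≤ (∫ z, A z * gq σ (x - z)) / ∫ z, B z * gq σ (x - z)) ∧
    ((∫ z, A z * gq σ (x - z)) / (∫ z, B z * gq σ (x - z)) ≤ hi) ∧
    0 < gA (gmv σ) B x ∧
    (∫ z, A z * gq σ (x - z)) / (∫ z, B z * gq σ (x - z)) = gA (gmv σ) A x / gA (gmv σ) B x := by
  have hBabs : ∀ z, |B z| ≤ 1 := fun z => by rw [abs_of_pos (hB0 z)]; exact hB z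
  have hAabs : ∀ z, |A z| ≤ max |lo| |hi| := fun z => by
    have := hlo z
    have := hhi z
    have h0 := (hB0 z).le
    have h1 := hB z
    have a1 : lo * B z ≥ -(max |lo| |hi|) := by
      nlinarith [neg_abs_le lo, le_max_left |lo| |hi|, abs_nonneg lo]
    have a2 : hi * B z ≤ (max |lo| |hi|) := by
      nlinarith [le_abs_self hi, le_max_right |lo| |hi|, abs_nonneg hi]
    rw [abs_le]; constructor <;> linarith
  have iA := gq_mul_integrable hσ hAm.aestronglyMeasurable hAabs x
  have iB := gq_mul_integrable hσ hBm.aestronglyMeasurable hBabs x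
  have pB : 0 < ∫ z, B z * gq σ (x - z) := by
    rw [integral_pos_iff_support_of_nonneg (fun z => (mul_pos (hB0 z) (gq_pos hσ _)).le) iB]
    have : Function.support (fun z => B z * gq σ (x - z)) = univ := by
      ext z; simp [(hB0 z).ne', (gq_pos hσ (x - z)).ne']
    rw [this]; simp
  refine ⟨?_, ?_, by rwa [gA_gq hσ], by rw [gA_gq hσ, gA_gq hσ]⟩
  · rw [le_div_iff₀ pB, ← integral_const_mul]
    refine integral_mono (iB.const_mul _) iA fun z => ?_
    simp only
    rw [← mul_assoc]
    exact mul_le_mul_of_nonneg_right (hlo z) (gq_pos hσ _).le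
  · rw [div_le_iff₀ pB, ← integral_const_mul]
    refine integral_mono iA (iB.const_mul _) fun z => ?_
    simp only
    rw [← mul_assoc]
    exact mul_le_mul_of_nonneg_right (hhi z) (gq_pos hσ _).le

lemma rhs_eq {σ : ℝ} (hσ : 0 < σ) {φ : ℝ → ℝ} (hφ : Measurable φ) {K : ℝ} (hK : ∀ z, |φ z| ≤ K)
    (a c : ℝ) {x : ℝ} (hx : x ≠ 0) :
    ∫ z, (a * gq σ (x - z) + c * gqbar σ x z) * φ z =
      a * gA (gmv σ) φ x + c * ((1 / x) * ∫ y in (0:ℝ)..x, gA (gmv σ) φ y) := by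
  have hprod : Integrable (Function.uncurry fun y z => φ z * gq σ (y - z))
      ((volume.restrict (uIoc 0 x)).prod volume) := by
    have hm : Measurable (Function.uncurry fun y z => φ z * gq σ (y - z)) := by
      apply Measurable.mul
      · exact hφ.comp measurable_snd
      · exact (gq_cont σ).measurable.comp (measurable_fst.sub measurable_snd)
    rw [integrable_prod_iff hm.aestronglyMeasurable]
    refine ⟨Eventually.of_forall fun y => gq_mul_integrable hσ hφ.aestronglyMeasurable hK y, ?_⟩
    have hfin : IsFiniteMeasure (volume.restrict (uIoc 0 x)) := by
      unfold uIoc; infer_instance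
    refine (integrable_const K).mono' ?_ (Eventually.of_forall fun y => ?_)
    · exact (hm.norm.aestronglyMeasurable).integral_prod_right'
    · rw [Real.norm_eq_abs, abs_of_nonneg (integral_nonneg fun _ => norm_nonneg _)]
      have i1 := (gq_mul_integrable hσ hφ.aestronglyMeasurable hK y).norm
      calc ∫ z, ‖Function.uncurry (fun y z => φ z * gq σ (y - z)) (y, z)‖
          ≤ ∫ z, K * gq σ (y - z) := by
            refine integral_mono i1 ((gq_integrable_sub hσ y).const_mul K) fun z => ?_
            simp only [Function.uncurry, norm_mul, Real.norm_eq_abs, abs_of_pos (gq_pos hσ _)]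
            exact mul_le_mul_of_nonneg_right (hK z) (gq_pos hσ _).le
        _ = K := by
            rw [integral_const_mul, integral_sub_left_eq_self (fun z => gq σ z) volume y, gq_integral hσ,
              mul_one]
  have hswap := intervalIntegral_integral_swap hprod
  have e1 : ∀ z, (a * gq σ (x - z) + c * gqbar σ x z) * φ z
      = a * (φ z * gq σ (x - z)) + c * ((1 / x) * ∫ y in (0:ℝ)..x, φ z * gq σ (y - z)) := by
    intro z
    simp only [gqbar, if_neg hx]
    rw [intervalIntegral.integral_const_mul]; ring
  have i2 : Integrable fun z => ∫ y in (0:ℝ)..x, φ z * gq σ (y - z) := by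
    simp_rw [intervalIntegral.intervalIntegral_eq_integral_uIoc]
    exact (hprod.integral_prod_right).const_mul _
  simp_rw [e1]
  rw [integral_add ((gq_mul_integrable hσ hφ.aestronglyMeasurable hK x).const_mul a)
    ((i2.const_mul _).const_mul _), integral_const_mul, integral_const_mul, integral_const_mul,
    ← hswap, gA_gq hσ]
  simp_rw [gA_gq hσ]

lemma IS_id {h F : ℝ → ℝ} (hc : Continuous h) {N : ℕ} (hN : 2 ≤ N)
    (hF : ∀ x, x ≠ 0 → F x = (1 / (N:ℝ)) * h x
      + (((N:ℝ) - 1) / (N:ℝ)) * ((1 / x) * ∫ y in (0:ℝ)..x, h y)) {x : ℝ} (hx : x ≠ 0) :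
    N * ∫ y in (0:ℝ)..1, F (x * y) * y ^ (N - 1) = (1 / x) * ∫ y in (0:ℝ)..x, h y := by
  obtain ⟨n, rfl⟩ := Nat.exists_eq_add_of_le' hN
  rw [show n + 2 - 1 = n + 1 by omega, ← intervalIntegral.integral_const_mul]
  set H : ℝ → ℝ := fun x => ∫ y in (0:ℝ)..x, h y with hH
  have dH : ∀ y, HasDerivAt H (h y) y := fun y =>
    intervalIntegral.integral_hasDerivAt_right (hc.intervalIntegrable _ _)
      hc.aestronglyMeasurable.stronglyMeasurableAtFilter hc.continuousAt
  have Hc : Continuous H := continuous_iff_continuousAt.2 fun y => (dH y).continuousAt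
  have dP : ∀ y, HasDerivAt (fun y => y ^ (n + 1) * (H (x * y) / x))
      ((((n + 1 : ℕ) : ℝ) * y ^ n) * (H (x * y) / x) + y ^ (n + 1) * (h (x * y))) y := by
    intro y
    have h1 := hasDerivAt_pow (n + 1) y
    have h2 : HasDerivAt (fun y => x * y) x y := by simpa using (hasDerivAt_id y).const_mul x
    have h3 := ((dH (x * y)).comp y h2).div_const x
    rw [mul_div_cancel_right₀ _ hx] at h3
    exact h1.mul h3
  have hcont : Continuous fun y => (((n + 1 : ℕ) : ℝ) * y ^ n) * (H (x * y) / x) + y ^ (n + 1) * (h (x * y)) := by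
    fun_prop
  have := intervalIntegral.integral_eq_sub_of_hasDerivAt (fun y _ => dP y)
    (hcont.intervalIntegrable 0 1)
  simp only [one_pow, mul_one, one_mul, mul_zero, ne_eq, Nat.add_eq_zero_iff, one_ne_zero, and_false,
    not_false_eq_true, zero_pow, zero_mul, sub_zero] at this
  rw [show (1 / x) * H x = H x / x by ring, ← this]
  apply intervalIntegral.integral_congr_ae
  refine Eventually.of_forall fun y hy => ?_
  rw [uIoc_of_le zero_le_one] at hy
  have hy0 : y ≠ 0 := hy.1.ne'
  rw [hF _ (mul_ne_zero hx hy0)]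
  have hn : ((n:ℝ) + 2) ≠ 0 := by positivity
  push_cast
  change _ * ((_ + _ * (_ * H (x * y))) * _) = _
  field_simp
  ring

section setup
variable {Ω : Type*} [MeasurableSpace Ω] {P : Measure Ω} [IsProbabilityMeasure P]
  {V : Ω → ℝ} {m M : ℝ}

lemma Pip_nonneg (y : ℝ) : 0 ≤ Pip P V y := ENNReal.toReal_nonneg
lemma Pim_nonneg (y : ℝ) : 0 ≤ Pim P V y := ENNReal.toReal_nonneg

lemma compl_set (y : ℝ) : {ω | V ω > y}ᶜ = {ω | V ω ≤ y} := by ext; simp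

lemma Pi_add (hm : Measurable V) (y : ℝ) : Pip P V y + Pim P V y = 1 := by
  have := probReal_add_probReal_compl (μ := P) (s := {ω | V ω > y}) (measurableSet_lt measurable_const hm)
  rw [compl_set] at this
  exact this

lemma Phi_add (hm : Measurable V) (hV : Integrable V P) (y : ℝ) :
    Phip P V y + Phim P V y = ∫ ω, V ω ∂P := by
  have := integral_add_compl (μ := P) (s := {ω | V ω > y}) (measurableSet_lt measurable_const hm) hV
  rw [compl_set] at this
  exact this

lemma set_lo (hV : Integrable V P) {c : ℝ} (s : Set Ω) (h : ∀ᵐ ω ∂(P.restrict s), c ≤ V ω) :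
    c * (P s).toReal ≤ ∫ ω in s, V ω ∂P := by
  have := integral_mono_ae (μ := P.restrict s) (f := fun _ => c) (integrable_const _) hV.integrableOn h
  simpa [mul_comm, Measure.real] using this

lemma set_hi (hV : Integrable V P) {c : ℝ} (s : Set Ω) (h : ∀ᵐ ω ∂(P.restrict s), V ω ≤ c) :
    ∫ ω in s, V ω ∂P ≤ c * (P s).toReal := by
  have := integral_mono_ae (μ := P.restrict s) (g := fun _ => c) hV.integrableOn (integrable_const _) h
  simpa [mul_comm, Measure.real] using this

lemma Phip_lo (hV : Integrable V P) (hs : SuppIoo P V m M) (y : ℝ) : m * Pip P V y ≤ Phip P V y :=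
  set_lo hV _ (ae_restrict_of_ae (hs.2.1.mono fun _ h => h.1))
lemma Phip_hi (hV : Integrable V P) (hs : SuppIoo P V m M) (y : ℝ) : Phip P V y ≤ M * Pip P V y :=
  set_hi hV _ (ae_restrict_of_ae (hs.2.1.mono fun _ h => h.2))
lemma Phim_lo (hV : Integrable V P) (hs : SuppIoo P V m M) (y : ℝ) : m * Pim P V y ≤ Phim P V y :=
  set_lo hV _ (ae_restrict_of_ae (hs.2.1.mono fun _ h => h.1))
lemma Phim_hi (hV : Integrable V P) (hs : SuppIoo P V m M) (y : ℝ) : Phim P V y ≤ M * Pim P V y :=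
  set_hi hV _ (ae_restrict_of_ae (hs.2.1.mono fun _ h => h.2))

lemma Phi_cross (hm : Measurable V) (hV : Integrable V P) (y : ℝ) :
    (∫ ω, V ω ∂P) * Pip P V y ≤ Phip P V y ∧ Phim P V y ≤ (∫ ω, V ω ∂P) * Pim P V y := by
  have h1 : y * Pip P V y ≤ Phip P V y := set_lo hV _
    ((ae_restrict_iff' (measurableSet_lt measurable_const hm)).2 (Eventually.of_forall fun ω h => le_of_lt h))
  have h2 : Phim P V y ≤ y * Pim P V y := set_hi hV _
    ((ae_restrict_iff' (measurableSet_le hm measurable_const)).2 (Eventually.of_forall fun ω h => h))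
  have h3 := Pi_add (P := P) hm y
  have h4 := Phi_add hm hV y
  have h5 := Pip_nonneg (P := P) (V := V) y
  have h6 := Pim_nonneg (P := P) (V := V) y
  have a1 := mul_le_mul_of_nonneg_right h1 h6
  have a2 := mul_le_mul_of_nonneg_right h2 h5
  have key : Phim P V y * Pip P V y ≤ Phip P V y * Pim P V y := by linarith
  rw [← h4]
  have e1 : Pim P V y = 1 - Pip P V y := by linarith
  rw [e1] at key ⊢
  constructor <;> nlinarith

lemma Pip_anti : Antitone (Pip P V) := fun y y' h =>
  ENNReal.toReal_mono (measure_ne_top _ _) (measure_mono fun ω (hω : V ω > y') => lt_of_le_of_lt h hω)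

lemma Pim_meas (hm : Measurable V) : Measurable (Pim P V) := by
  have : Pim P V = fun y => 1 - Pip P V y := funext fun y => by linarith [Pi_add (P := P) hm y]
  rw [this]; exact measurable_const.sub Pip_anti.measurable

lemma U_plus (hV : Integrable V P) (y : ℝ) :
    ∫ ω in {ω | V ω > y}, (M - V ω) ∂P = M * Pip P V y - Phip P V y := by
  rw [integral_sub (integrable_const _) hV.integrableOn]
  simp [Pip, Phip, Measure.real, mul_comm]

lemma U_minus (hV : Integrable V P) (y : ℝ) :
    ∫ ω in {ω | V ω ≤ y}, (V ω - m) ∂P = Phim P V y - m * Pim P V y := by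
  rw [integral_sub hV.integrableOn (integrable_const _)]
  simp [Pim, Phim, Measure.real, mul_comm]

lemma Phip_meas (hV : Integrable V P) (hs : SuppIoo P V m M) : Measurable (Phip P V) := by
  have h1 : Antitone (fun y => ∫ ω in {ω | V ω > y}, (M - V ω) ∂P) := by
    intro y y' h
    refine setIntegral_mono_set ((integrable_const _).sub hV).integrableOn
      (ae_restrict_of_ae (hs.2.1.mono fun ω h => sub_nonneg.2 h.2)) (Eventually.of_forall ?_)
    exact fun ω (hω : V ω > y') => lt_of_le_of_lt h hω
  have : Phip P V = fun y => M * Pip P V y - ∫ ω in {ω | V ω > y}, (M - V ω) ∂P :=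
    funext fun y => by rw [U_plus hV]; ring
  rw [this]; exact (Pip_anti.measurable.const_mul M).sub h1.measurable

lemma Phim_meas (hm : Measurable V) (hV : Integrable V P) (hs : SuppIoo P V m M) :
    Measurable (Phim P V) := by
  have : Phim P V = fun y => (∫ ω, V ω ∂P) - Phip P V y :=
    funext fun y => by linarith [Phi_add hm hV y]
  rw [this]; exact measurable_const.sub (Phip_meas hV hs)

variable {σ : ℝ} {N : ℕ} {F : ℝ → ℝ}

lemma abs_aux {A B : ℝ} (h0 : 0 ≤ B) (h1 : m * B ≤ A) (h2 : A ≤ M * B) : |A| ≤ max |m| |M| * B := by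
  rw [abs_le]
  constructor
  · nlinarith [neg_abs_le m, le_max_left |m| |M|]
  · nlinarith [le_abs_self M, le_max_right |m| |M|]

lemma phig_basic (hm : Measurable V) (hV : Integrable V P) (hs : SuppIoo P V m M) (hσ : 0 < σ) (F : ℝ → ℝ) :
    (Measurable (phip P V σ F) ∧ Measurable (phim P V σ F)) ∧ Measurable (phig P V σ F) ∧
      ∀ z, |phig P V σ F z| ≤ max |m| |M| := by
  have hK : 0 ≤ max |m| |M| := (abs_nonneg _).trans (le_max_left _ _)
  have h1 := ratio_meas hσ (A := fun z => Phip P V (F z)) (B := fun z => Pip P V (F z)) hK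
    (fun z => abs_aux (Pip_nonneg _) (Phip_lo hV hs _) (Phip_hi hV hs _))
    (fun z => by rw [abs_of_nonneg (Pip_nonneg _)]; linarith [Pi_add (P := P) hm (F z), Pim_nonneg (P := P) (V := V) (F z)])
  have h2 := ratio_meas hσ (A := fun z => Phim P V (F z)) (B := fun z => Pim P V (F z)) hK
    (fun z => abs_aux (Pim_nonneg _) (Phim_lo hV hs _) (Phim_hi hV hs _))
    (fun z => by rw [abs_of_nonneg (Pim_nonneg _)]; linarith [Pi_add (P := P) hm (F z), Pip_nonneg (P := P) (V := V) (F z)])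
  refine ⟨⟨h1.1, h2.1⟩, Measurable.ite measurableSet_Ici h1.1 h2.1, fun z => ?_⟩
  unfold phig
  split_ifs
  · exact h1.2 z
  · exact h2.2 z

lemma F_eq (hm : Measurable V) (hV : Integrable V P) (hs : SuppIoo P V m M) (hσ : 0 < σ)
    (hF : SolvesE P V σ N F) {x : ℝ} (hx : x ≠ 0) :
    F x = (1 / (N:ℝ)) * gA (gmv σ) (phig P V σ F) x
      + (((N:ℝ) - 1) / (N:ℝ)) * ((1 / x) * ∫ y in (0:ℝ)..x, gA (gmv σ) (phig P V σ F) y) := by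
  obtain ⟨_, h1, h2⟩ := phig_basic hm hV hs hσ F
  rw [hF x, rhs_eq hσ h1 h2 _ _ hx]

lemma F_meas (hm : Measurable V) (hV : Integrable V P) (hs : SuppIoo P V m M) (hσ : 0 < σ)
    (hF : SolvesE P V σ N F) : Measurable F := by
  obtain ⟨_, h1, h2⟩ := phig_basic hm hV hs hσ F
  have hc := gA_cont hσ _ h2
  have hH : Continuous fun x => ∫ y in (0:ℝ)..x, gA (gmv σ) (phig P V σ F) y :=
    intervalIntegral.continuous_primitive (fun a b => hc.intervalIntegrable a b) 0
  have e : F = fun x => if x = 0 then F 0 else (1 / (N:ℝ)) * gA (gmv σ) (phig P V σ F) x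
      + (((N:ℝ) - 1) / (N:ℝ)) * ((1 / x) * ∫ y in (0:ℝ)..x, gA (gmv σ) (phig P V σ F) y) := by
    ext x
    split_ifs with h
    · rw [h]
    · exact F_eq hm hV hs hσ hF h
  rw [e]
  refine Measurable.ite (measurableSet_eq) measurable_const ?_
  exact (hc.measurable.const_mul _).add
    (((measurable_const.div measurable_id).mul hH.measurable).const_mul _)

lemma phip_facts (hm : Measurable V) (hV : Integrable V P) (hs : SuppIoo P V m M) (hσ : 0 < σ)
    (hFm : Measurable F) (hFr : ∀ x, F x ∈ Ioo m M) (x : ℝ) :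
    (∫ ω, V ω ∂P) ≤ phip P V σ F x ∧ phip P V σ F x ≤ M ∧
    phip P V σ F x * gA (gmv σ) (fun y => Pip P V (F y)) x = gA (gmv σ) (fun y => Phip P V (F y)) x := by
  have h := ratio_eq hσ (A := fun z => Phip P V (F z)) (B := fun z => Pip P V (F z))
    (lo := ∫ ω, V ω ∂P) (hi := M) ((Phip_meas hV hs).comp hFm) (Pip_anti.measurable.comp hFm)
    (fun z => ENNReal.toReal_pos (hs.2.2.1 _ (hFr z).2).ne' (measure_ne_top _ _))
    (fun z => by linarith [Pi_add (P := P) hm (F z), Pim_nonneg (P := P) (V := V) (F z)])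
    (fun z => (Phi_cross hm hV _).1) (fun z => Phip_hi hV hs _) x
  refine ⟨h.1, h.2.1, ?_⟩
  unfold phip
  rw [h.2.2.2, div_mul_cancel₀ _ h.2.2.1.ne']

lemma phim_facts (hm : Measurable V) (hV : Integrable V P) (hs : SuppIoo P V m M) (hσ : 0 < σ)
    (hFm : Measurable F) (hFr : ∀ x, F x ∈ Ioo m M) (x : ℝ) :
    m ≤ phim P V σ F x ∧ phim P V σ F x ≤ (∫ ω, V ω ∂P) ∧
    phim P V σ F x * gA (gmv σ) (fun y => Pim P V (F y)) x = gA (gmv σ) (fun y => Phim P V (F y)) x := by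
  have h := ratio_eq hσ (A := fun z => Phim P V (F z)) (B := fun z => Pim P V (F z))
    (lo := m) (hi := ∫ ω, V ω ∂P) ((Phim_meas hm hV hs).comp hFm) ((Pim_meas hm).comp hFm)
    (fun z => ENNReal.toReal_pos (hs.2.2.2 _ (hFr z).1).ne' (measure_ne_top _ _))
    (fun z => by linarith [Pi_add (P := P) hm (F z), Pip_nonneg (P := P) (V := V) (F z)])
    (fun z => Phim_lo hV hs _) (fun z => (Phi_cross hm hV _).2) x
  refine ⟨h.1, h.2.1, ?_⟩
  unfold phim
  rw [h.2.2.2, div_mul_cancel₀ _ h.2.2.1.ne']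

lemma EV_mem (hV : Integrable V P) (hs : SuppIoo P V m M) : m ≤ ∫ ω, V ω ∂P ∧ ∫ ω, V ω ∂P ≤ M := by
  have h1 := set_lo hV univ (ae_restrict_of_ae (hs.2.1.mono fun _ h => h.1))
  have h2 := set_hi hV univ (ae_restrict_of_ae (hs.2.1.mono fun _ h => h.2))
  simp at h1 h2
  exact ⟨h1, h2⟩

lemma Pip_hasDeriv (hC1 : ContDiffOn ℝ 1 (Pip P V) (Ioo m M)) {y : ℝ} (hy : y ∈ Ioo m M) :
    HasDerivAt (Pip P V) (deriv (Pip P V) y) y :=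
  ((hC1.differentiableOn (by norm_num)).differentiableAt (isOpen_Ioo.mem_nhds hy)).hasDerivAt

lemma law_plus (hm : Measurable V) (hV : Integrable V P) (hs : SuppIoo P V m M)
    (hC1 : ContDiffOn ℝ 1 (Pip P V) (Ioo m M)) {Lp : ℝ}
    (hLp : Tendsto (deriv (Psip P V)) (nhdsWithin M (Iio M)) (nhds Lp)) :
    Law (M - m) (M - ∫ ω, V ω ∂P) Lp (fun d => Pip P V (M - d))
      (fun d => M * Pip P V (M - d) - Phip P V (M - d)) (fun d => -deriv (Pip P V) (M - d)) := by
  have hmM := hs.1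
  have hX : Integrable (fun ω => M - V ω) P := (integrable_const _).sub hV
  have hA : ∀ d : ℝ, MeasurableSet {ω | V ω > M - d} := fun d => measurableSet_lt measurable_const hm
  have hle : ∀ d : ℝ, ∀ ω ∈ {ω | V ω > M - d}, M - V ω ≤ d := fun d ω (h : V ω > M - d) => by linarith
  have hge : ∀ d : ℝ, ∀ ω, ω ∉ {ω | V ω > M - d} → d ≤ M - V ω := fun d ω h => by
    by_contra hc; exact h (show V ω > M - d by linarith)
  have hmono : Monotone (fun d : ℝ => {ω | V ω > M - d}) := fun d d' h ω (hω : V ω > M - d) => by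
    change V ω > M - d'; linarith
  have dw : ∀ d ∈ Ioo 0 (M - m), HasDerivAt (fun d => Pip P V (M - d)) (-deriv (Pip P V) (M - d)) d := by
    intro d hd
    have h1 := Pip_hasDeriv hC1 (y := M - d) ⟨by linarith [hd.2], by linarith [hd.1]⟩
    have h2 : HasDerivAt (fun d => M - d) (-1) d := by simpa using (hasDerivAt_id d).const_sub M
    have h3 := h1.comp d h2
    rw [mul_neg, mul_one] at h3
    exact h3
  have eU : ∀ d, ∫ ω in {ω | V ω > M - d}, (M - V ω) ∂P = M * Pip P V (M - d) - Phip P V (M - d) :=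
    fun d => U_plus hV _
  have wpos : ∀ d > 0, 0 < Pip P V (M - d) := fun d hd =>
    ENNReal.toReal_pos (hs.2.2.1 _ (by linarith)).ne' (measure_ne_top _ _)
  have key : ∀ d ∈ Ioo 0 (M - m), deriv (Psip P V) (M - d) = -deriv (Pip P V) (M - d) *
      (d - (∫ ω in {ω | V ω > M - d}, (M - V ω) ∂P) / Pip P V (M - d)) / Pip P V (M - d) := by
    intro d hd
    have h1 := Law.dψ_aux (w := fun d => P.real {ω | V ω > M - d})
      (U := fun d => ∫ ω in {ω | V ω > M - d}, (M - V ω) ∂P)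
      (fun d d' h => measureReal_mono (hmono h))
      (fun d d' h => (fam_diff hX hA hle hge hmono h).1)
      (fun d d' h => (fam_diff hX hA hle hge hmono h).2) (dw d hd) (wpos d hd.1).ne'
    have h2 : HasDerivAt (fun y => M - y) (-1) (M - d) := by
      simpa using (hasDerivAt_id (M - d)).const_sub M
    have h1' := h1
    rw [show d = M - (M - d) by ring] at h1
    have h3 := (h1.comp (M - d) h2).const_sub M
    rw [show M - (M - d) = d by ring] at h3
    have h4 : Psip P V =ᶠ[nhds (M - d)] fun y => M -
        ((fun t => (∫ ω in {ω | V ω > M - t}, (M - V ω) ∂P) / P.real {ω | V ω > M - t}) ∘ fun y => M - y) y := by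
      filter_upwards [Iio_mem_nhds (show M - d < M by linarith [hd.1])] with y hy
      have hp := wpos (M - y) (by simpa using hy)
      simp only [Function.comp]
      change _ = M - _ / Pip P V (M - (M - y))
      rw [eU, sub_sub_cancel]
      rw [sub_sub_cancel] at hp
      unfold Psip
      field_simp
      ring
    have h5 := (h3.congr_of_eventuallyEq h4).deriv
    rw [h5]
    simp only [mul_neg, mul_one, neg_neg]
    rfl
  have lim : Tendsto (fun d => -deriv (Pip P V) (M - d) *
      (d - (∫ ω in {ω | V ω > M - d}, (M - V ω) ∂P) / Pip P V (M - d)) / Pip P V (M - d))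
      (nhdsWithin 0 (Ioi 0)) (nhds Lp) := by
    have t : Tendsto (fun d : ℝ => M - d) (nhdsWithin 0 (Ioi 0)) (nhdsWithin M (Iio M)) := by
      apply tendsto_nhdsWithin_of_tendsto_nhds_of_eventually_within
      · have : Tendsto (fun d : ℝ => M - d) (nhds 0) (nhds (M - 0)) := by
          exact (continuous_const.sub continuous_id).tendsto 0
        rw [sub_zero] at this
        exact this.mono_left nhdsWithin_le_nhds
      · filter_upwards [self_mem_nhdsWithin] with d hd
        simpa using hd
    refine (hLp.comp t).congr' ?_
    filter_upwards [Ioo_mem_nhdsGT (show 0 < M - m by linarith)] with d hd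
    exact key d hd
  have := lawOf (P := P) (X := fun ω => M - V ω) (A := fun d => {ω | V ω > M - d}) (b := M - m)
    hX hA hle hge hmono (by linarith)
    (hs.2.1.mono fun ω h => sub_nonneg.2 h.2) (hs.2.1.mono fun ω h => by linarith [h.1])
    (fun d hd => hs.2.2.1 _ (by linarith))
    (fun d hd => by rw [compl_set]; exact hs.2.2.2 _ (by linarith))
    (w' := fun d => -deriv (Pip P V) (M - d)) (L := Lp) dw lim
  simp only [eU] at this
  rw [integral_sub (integrable_const _) hV] at this
  simpa [Measure.real, Pip] using this

lemma law_minus (hm : Measurable V) (hV : Integrable V P) (hs : SuppIoo P V m M)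
    (hC1 : ContDiffOn ℝ 1 (Pip P V) (Ioo m M)) {Lm : ℝ}
    (hLm : Tendsto (deriv (Psim P V)) (nhdsWithin m (Ioi m)) (nhds Lm)) :
    Law (M - m) ((∫ ω, V ω ∂P) - m) Lm (fun d => Pim P V (m + d))
      (fun d => Phim P V (m + d) - m * Pim P V (m + d)) (fun d => -deriv (Pip P V) (m + d)) := by
  have hmM := hs.1
  have hX : Integrable (fun ω => V ω - m) P := hV.sub (integrable_const _)
  have hA : ∀ d : ℝ, MeasurableSet {ω | V ω ≤ m + d} := fun d => measurableSet_le hm measurable_const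
  have hle : ∀ d : ℝ, ∀ ω ∈ {ω | V ω ≤ m + d}, V ω - m ≤ d := fun d ω (h : V ω ≤ m + d) => by linarith
  have hge : ∀ d : ℝ, ∀ ω, ω ∉ {ω | V ω ≤ m + d} → d ≤ V ω - m := fun d ω h => by
    by_contra hc; exact h (show V ω ≤ m + d by linarith)
  have hmono : Monotone (fun d : ℝ => {ω | V ω ≤ m + d}) := fun d d' h ω (hω : V ω ≤ m + d) => by
    change V ω ≤ m + d'; linarith
  have dw : ∀ d ∈ Ioo 0 (M - m), HasDerivAt (fun d => Pim P V (m + d)) (-deriv (Pip P V) (m + d)) d := by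
    intro d hd
    have h1 := Pip_hasDeriv hC1 (y := m + d) ⟨by linarith [hd.1], by linarith [hd.2]⟩
    have h2 : HasDerivAt (fun d => m + d) 1 d := by simpa using (hasDerivAt_id d).const_add m
    have h3 := (h1.comp d h2).const_sub 1
    rw [mul_one] at h3
    refine h3.congr_of_eventuallyEq (Eventually.of_forall fun t => ?_)
    simp only [Function.comp]
    linarith [Pi_add (P := P) hm (m + t)]
  have eU : ∀ d, ∫ ω in {ω | V ω ≤ m + d}, (V ω - m) ∂P = Phim P V (m + d) - m * Pim P V (m + d) :=
    fun d => U_minus hV _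
  have wpos : ∀ d > 0, 0 < Pim P V (m + d) := fun d hd =>
    ENNReal.toReal_pos (hs.2.2.2 _ (by linarith)).ne' (measure_ne_top _ _)
  have key : ∀ d ∈ Ioo 0 (M - m), deriv (Psim P V) (m + d) = -deriv (Pip P V) (m + d) *
      (d - (∫ ω in {ω | V ω ≤ m + d}, (V ω - m) ∂P) / Pim P V (m + d)) / Pim P V (m + d) := by
    intro d hd
    have h1 := Law.dψ_aux (w := fun d => P.real {ω | V ω ≤ m + d})
      (U := fun d => ∫ ω in {ω | V ω ≤ m + d}, (V ω - m) ∂P)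
      (fun d d' h => measureReal_mono (hmono h))
      (fun d d' h => (fam_diff hX hA hle hge hmono h).1)
      (fun d d' h => (fam_diff hX hA hle hge hmono h).2) (dw d hd) (wpos d hd.1).ne'
    have h2 : HasDerivAt (fun y => y - m) 1 (m + d) := by
      simpa using (hasDerivAt_id (m + d)).sub_const m
    rw [show d = (m + d) - m by ring] at h1
    have h3 := (h1.comp (m + d) h2).const_add m
    rw [show m + d - m = d by ring] at h3
    have h4 : Psim P V =ᶠ[nhds (m + d)] fun y => m +
        ((fun t => (∫ ω in {ω | V ω ≤ m + t}, (V ω - m) ∂P) / P.real {ω | V ω ≤ m + t}) ∘ fun y => y - m) y := by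
      filter_upwards [Ioi_mem_nhds (show m < m + d by linarith [hd.1])] with y hy
      have hp := wpos (y - m) (by simpa using hy)
      simp only [Function.comp]
      change _ = m + _ / Pim P V (m + (y - m))
      rw [eU, add_sub_cancel]
      rw [add_sub_cancel] at hp
      unfold Psim
      field_simp
      ring
    have h5 := (h3.congr_of_eventuallyEq h4).deriv
    rw [h5]
    simp only [mul_one]
    rfl
  have lim : Tendsto (fun d => -deriv (Pip P V) (m + d) *
      (d - (∫ ω in {ω | V ω ≤ m + d}, (V ω - m) ∂P) / Pim P V (m + d)) / Pim P V (m + d))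
      (nhdsWithin 0 (Ioi 0)) (nhds Lm) := by
    have t : Tendsto (fun d : ℝ => m + d) (nhdsWithin 0 (Ioi 0)) (nhdsWithin m (Ioi m)) := by
      apply tendsto_nhdsWithin_of_tendsto_nhds_of_eventually_within
      · have : Tendsto (fun d : ℝ => m + d) (nhds 0) (nhds (m + 0)) := by
          exact (continuous_const.add continuous_id).tendsto 0
        rw [add_zero] at this
        exact this.mono_left nhdsWithin_le_nhds
      · filter_upwards [self_mem_nhdsWithin] with d hd
        simpa using hd
    refine (hLm.comp t).congr' ?_
    filter_upwards [Ioo_mem_nhdsGT (show 0 < M - m by linarith)] with d hd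
    exact key d hd
  have := lawOf (P := P) (X := fun ω => V ω - m) (A := fun d => {ω | V ω ≤ m + d}) (b := M - m)
    hX hA hle hge hmono (by linarith)
    (hs.2.1.mono fun ω h => sub_nonneg.2 h.1) (hs.2.1.mono fun ω h => by linarith [h.2])
    (fun d hd => hs.2.2.2 _ (by linarith))
    (fun d hd => by rw [← compl_set, compl_compl]; exact hs.2.2.1 _ (by linarith))
    (w' := fun d => -deriv (Pip P V) (m + d)) (L := Lm) dw lim
  simp only [eU] at this
  rw [integral_sub hV (integrable_const _)] at this
  simpa [Measure.real, Pim] using this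

end setup

lemma gA_lin {γ : Measure ℝ} [IsProbabilityMeasure γ] {f g : ℝ → ℝ} (hf : Measurable f) (hg : Measurable g)
    {C C' : ℝ} (hC : ∀ x, |f x| ≤ C) (hC' : ∀ x, |g x| ≤ C') (a : ℝ) (x : ℝ) :
    gA γ (fun y => a * f y - g y) x = a * gA γ f x - gA γ g x := by
  unfold gA
  rw [integral_sub ((gA_int hf hC x).const_mul a) (gA_int hg hC' x), integral_const_mul]

lemma avg_const_sub {h : ℝ → ℝ} (hc : Continuous h) (a : ℝ) {x : ℝ} (hx : x ≠ 0) :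
    (1 / x) * ∫ y in (0:ℝ)..x, (a - h y) = a - (1 / x) * ∫ y in (0:ℝ)..x, h y := by
  rw [intervalIntegral.integral_sub (by simp) (hc.intervalIntegrable _ _)]
  simp only [intervalIntegral.integral_const, sub_zero, smul_eq_mul]
  field_simp

lemma avg_sub_const {h : ℝ → ℝ} (hc : Continuous h) (a : ℝ) {x : ℝ} (hx : x ≠ 0) :
    (1 / x) * ∫ y in (0:ℝ)..x, (h y - a) = (1 / x) * (∫ y in (0:ℝ)..x, h y) - a := by
  rw [intervalIntegral.integral_sub (hc.intervalIntegrable _ _) (by simp)]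
  simp only [intervalIntegral.integral_const, sub_zero, smul_eq_mul]
  field_simp

section final
variable {Ω : Type*} [MeasurableSpace Ω] {P : Measure Ω} [IsProbabilityMeasure P]
  {V : Ω → ℝ} {m M : ℝ} {σ : ℝ} {N : ℕ} {F : ℝ → ℝ}

lemma plus_side (hm : Measurable V) (hV : Integrable V P) (hs : SuppIoo P V m M)
    (hσ : 0 < σ) (hN : 2 ≤ N) (hC1 : ContDiffOn ℝ 1 (Pip P V) (Ioo m M)) {Lp : ℝ}
    (hLp : Tendsto (deriv (Psip P V)) (nhdsWithin M (Iio M)) (nhds Lp))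
    (hFr : ∀ x, F x ∈ Ioo m M) (hF : SolvesE P V σ N F) :
    Tendsto (fun x : ℝ => (M - (1 / x) * ∫ y in (0:ℝ)..x, gA (gmv σ) (phig P V σ F) y) / (M - F x)) atTop
      (nhds ((N:ℝ) / ((N:ℝ) + (Lp - 1) / (1 - Lp / (N:ℝ))))) := by
  have hFm := F_meas hm hV hs hσ hF
  obtain ⟨_, hφm, hφb⟩ := phig_basic hm hV hs hσ F
  have hc := gA_cont hσ _ hφb
  have hE := EV_mem hV hs
  have hN0 : (N:ℝ) ≠ 0 := by positivity
  have hp := phip_facts hm hV hs hσ hFm hFr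
  have hq := phim_facts hm hV hs hσ hFm hFr
  have eA : gA (gmv σ) (fun z => M - phig P V σ F z) = fun x => M - gA (gmv σ) (phig P V σ F) x := by
    ext x
    have := gA_lin (γ := gmv σ) (f := fun _ => (1:ℝ)) measurable_const hφm (C := 1) (by simp) hφb M x
    rw [gA_const] at this
    simpa using this
  have hmem : ∀ z, m ≤ phig P V σ F z ∧ phig P V σ F z ≤ M := by
    intro z
    unfold phig
    split_ifs
    · exact ⟨hE.1.trans (hp z).1, (hp z).2.1⟩
    · exact ⟨(hq z).1, (hq z).2.1.trans hE.2⟩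
  have core := (law_plus hm hV hs hC1 hLp).toCore (γ := gmv σ) (N := N)
    (D := fun x => M - F x) (κ := fun z => M - phig P V σ F z) hN (gmv_exp σ) (gmv_open hσ)
    (measurable_const.sub hFm) (fun x => ⟨by linarith [(hFr x).2], by linarith [(hFr x).1]⟩)
    (measurable_const.sub hφm) (fun z => by linarith [(hmem z).2]) (fun z => by linarith [(hmem z).1])
    (by
      intro z hz
      simp only [sub_sub_cancel]
      rw [gA_lin (f := fun y => Pip P V (F y)) (g := fun y => Phip P V (F y)) (Pip_anti.measurable.comp hFm) ((Phip_meas hV hs).comp hFm)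
        (C := 1) (C' := max |m| |M| * 1)]
      · rw [← (hp z).2.2, phig, if_pos hz]; ring
      · intro x
        rw [abs_of_nonneg (Pip_nonneg _)]; linarith [Pi_add (P := P) hm (F x), Pim_nonneg (P := P) (V := V) (F x)]
      · intro x
        refine (abs_aux (Pip_nonneg _) (Phip_lo hV hs _) (Phip_hi hV hs _)).trans ?_
        refine mul_le_mul_of_nonneg_left ?_ ((abs_nonneg _).trans (le_max_left _ _))
        linarith [Pi_add (P := P) hm (F x), Pim_nonneg (P := P) (V := V) (F x)])
    (by
      intro z hz
      rw [phig, if_neg (not_le.2 hz)]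
      linarith [(hq z).2.1])
    (by rw [eA]; exact continuous_const.sub hc)
    (by
      intro x hx
      rw [eA]
      simp only
      rw [avg_const_sub hc M hx]
      rw [F_eq hm hV hs hσ hF hx]
      field_simp
      ring)
  refine core.ratio_lim.congr' ?_
  filter_upwards [eventually_gt_atTop 0] with x hx
  rw [Gf, eA]
  simp only
  rw [avg_const_sub hc M hx.ne']

lemma minus_side (hm : Measurable V) (hV : Integrable V P) (hs : SuppIoo P V m M)
    (hσ : 0 < σ) (hN : 2 ≤ N) (hC1 : ContDiffOn ℝ 1 (Pip P V) (Ioo m M)) {Lm : ℝ}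
    (hLm : Tendsto (deriv (Psim P V)) (nhdsWithin m (Ioi m)) (nhds Lm))
    (hFr : ∀ x, F x ∈ Ioo m M) (hF : SolvesE P V σ N F) :
    Tendsto (fun x : ℝ => ((1 / x) * (∫ y in (0:ℝ)..x, gA (gmv σ) (phig P V σ F) y) - m) / (F x - m)) atBot
      (nhds ((N:ℝ) / ((N:ℝ) + (Lm - 1) / (1 - Lm / (N:ℝ))))) := by
  have hFm := F_meas hm hV hs hσ hF
  obtain ⟨⟨hpm, hqm⟩, hφm, hφb⟩ := phig_basic hm hV hs hσ F
  have hc := gA_cont hσ _ hφb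
  have hE := EV_mem hV hs
  have hN0 : (N:ℝ) ≠ 0 := by positivity
  have hp := phip_facts hm hV hs hσ hFm hFr
  have hq := phim_facts hm hV hs hσ hFm hFr
  set κ : ℝ → ℝ := fun z => (if 0 ≤ z then phim P V σ F (-z) else phip P V σ F (-z)) - m with hκ
  have hκm : Measurable κ := (Measurable.ite measurableSet_Ici (hqm.comp measurable_neg)
    (hpm.comp measurable_neg)).sub measurable_const
  have eA : gA (gmv σ) κ = fun x => gA (gmv σ) (phig P V σ F) (-x) - m := by
    ext x
    have := gA_lin (γ := gmv σ) (g := fun _ => m) (hφm.comp measurable_neg) measurable_const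
      (C' := |m|) (fun z => hφb (-z)) (by simp) 1 x
    rw [gA_const, one_mul] at this
    simp only [Function.comp_def, one_mul] at this
    rw [gA_neg hσ] at this
    rw [← this, gA_gq hσ, gA_gq hσ]
    apply integral_congr_ae
    have h0 : ∀ᵐ z : ℝ, z ≠ 0 := by
      rw [ae_iff]; simp
    filter_upwards [h0] with z hz
    simp only [hκ, phig]
    rcases lt_or_gt_of_ne hz with h | h
    · rw [if_neg (not_le.2 h), if_pos (by linarith)]
    · rw [if_pos h.le, if_neg (by linarith)]
  have hmem : ∀ z, 0 ≤ κ z ∧ κ z ≤ M - m := by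
    intro z
    simp only [hκ]
    split_ifs
    · constructor <;> linarith [(hq (-z)).1, (hq (-z)).2.1, hE.2]
    · constructor <;> linarith [(hp (-z)).1, (hp (-z)).2.1, hE.1]
  have hcn : Continuous fun x => gA (gmv σ) (phig P V σ F) (-x) := hc.comp continuous_neg
  have core := (law_minus hm hV hs hC1 hLm).toCore (γ := gmv σ) (N := N)
    (D := fun x => F (-x) - m) (κ := κ) hN (gmv_exp σ) (gmv_open hσ)
    ((hFm.comp measurable_neg).sub measurable_const)
    (fun x => ⟨by linarith [(hFr (-x)).1], by linarith [(hFr (-x)).2]⟩)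
    hκm (fun z => (hmem z).1) (fun z => (hmem z).2)
    (by
      intro z hz
      have hFn := hFm.comp measurable_neg
      have key := gA_lin (γ := gmv σ) ((Pim_meas (P := P) hm).comp hFm) ((Phim_meas hm hV hs).comp hFm)
        (C := 1) (C' := max |m| |M| * 1)
        (by
          intro x
          simp only [Function.comp]
          rw [abs_of_nonneg (Pim_nonneg _)]
          linarith [Pi_add (P := P) hm (F x), Pip_nonneg (P := P) (V := V) (F x)])
        (by
          intro x
          refine (abs_aux (Pim_nonneg _) (Phim_lo hV hs _) (Phim_hi hV hs _)).trans ?_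
          refine mul_le_mul_of_nonneg_left ?_ ((abs_nonneg _).trans (le_max_left _ _))
          linarith [Pi_add (P := P) hm (F x), Pip_nonneg (P := P) (V := V) (F x)]) m (-z)
      simp only [add_sub_cancel]
      have e1 := gA_neg hσ (fun y => Pim P V (F y)) z
      have e2 := gA_neg hσ (fun y => m * Pim P V (F y) - Phim P V (F y)) z
      have e3 : gA (gmv σ) (fun y => Phim P V (F (-y)) - m * Pim P V (F (-y))) z
          = - gA (gmv σ) (fun y => m * Pim P V (F (-y)) - Phim P V (F (-y))) z := by
        unfold gA
        rw [← integral_neg]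
        congr 1; ext u; ring
      rw [e1, e3, e2]
      simp only [Function.comp_def] at key
      rw [key, ← (hq (-z)).2.2]
      simp only [hκ, if_pos hz]
      ring)
    (by
      intro z hz
      simp only [hκ]
      rw [if_neg (not_le.2 hz)]
      linarith [(hp (-z)).1])
    (by rw [eA]; exact hcn.sub continuous_const)
    (by
      intro x hx
      rw [eA]
      simp only
      rw [avg_sub_const hcn m hx]
      rw [F_eq hm hV hs hσ hF (neg_ne_zero.2 hx)]
      rw [intervalIntegral.integral_comp_neg, neg_zero, intervalIntegral.integral_symm]
      field_simp
      ring)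
  have := core.ratio_lim.comp tendsto_neg_atBot_atTop
  refine this.congr' ?_
  filter_upwards [eventually_lt_atBot 0] with x hx
  simp only [Function.comp]
  rw [Gf, eA]
  simp only
  rw [avg_sub_const hcn m (neg_ne_zero.2 hx.ne), intervalIntegral.integral_comp_neg, neg_zero,
    intervalIntegral.integral_symm, neg_neg]
  congr 2
  field_simp
end final

/-- Let `N ≥ 2`, `Π⁺` be `C¹` on `(m,M)`, with `Ψ⁺ₓ(M)` and `Ψ⁻ₓ(m)` existing as
the one-sided limits of the derivatives of `Ψ⁺` at `M⁻` and of `Ψ⁻` at `m⁺`. Let `F` solve (E)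
with values in `(m,M)` and define `IS(x) = N·∫₀¹ F(x·y)·y^{N−1} dy`. Then
`(M − IS(x))/(M − F(x)) → N/(N + ρ⁺)` as `x → ∞` and
`(IS(x) − m)/(F(x) − m) → N/(N + ρ⁻)` as `x → −∞`. -/
theorem stmt19 {Ω : Type*} [MeasurableSpace Ω] (P : Measure Ω) [IsProbabilityMeasure P]
    (V : Ω → ℝ) (hVmeas : Measurable V) (hV : Integrable V P)
    (m M : ℝ) (hsupp : SuppIoo P V m M)
    (σ : ℝ) (hσ : 0 < σ) (N : ℕ) (hN : 2 ≤ N)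
    (hC1 : ContDiffOn ℝ 1 (Pip P V) (Set.Ioo m M))
    (Lp : ℝ) (hLp : Tendsto (deriv (Psip P V)) (nhdsWithin M (Set.Iio M)) (nhds Lp))
    (Lm : ℝ) (hLm : Tendsto (deriv (Psim P V)) (nhdsWithin m (Set.Ioi m)) (nhds Lm))
    (F : ℝ → ℝ) (hFr : ∀ x, F x ∈ Set.Ioo m M) (hFsol : SolvesE P V σ N F)
    (IS : ℝ → ℝ)
    (hIS : ∀ x : ℝ, IS x = N * ∫ y in (0:ℝ)..1, F (x * y) * y ^ (N - 1)) :
    Tendsto (fun x : ℝ => (M - IS x) / (M - F x)) atTop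
      (nhds ((N:ℝ) / ((N:ℝ) + (Lp - 1) / (1 - Lp / (N:ℝ))))) ∧
    Tendsto (fun x : ℝ => (IS x - m) / (F x - m)) atBot
      (nhds ((N:ℝ) / ((N:ℝ) + (Lm - 1) / (1 - Lm / (N:ℝ))))) := by
  obtain ⟨_, hφm, hφb⟩ := phig_basic hVmeas hV hsupp hσ F
  have hc := gA_cont hσ _ hφb
  have e : ∀ x : ℝ, x ≠ 0 → IS x = (1 / x) * ∫ y in (0:ℝ)..x, gA (gmv σ) (phig P V σ F) y := by
    intro x hx
    rw [hIS x]
    exact IS_id hc hN (fun y hy => F_eq hVmeas hV hsupp hσ hFsol hy) hx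
  constructor
  · refine (plus_side hVmeas hV hsupp hσ hN hC1 hLp hFr hFsol).congr' ?_
    filter_upwards [eventually_gt_atTop 0] with x hx
    rw [e x hx.ne']
  · refine (minus_side hVmeas hV hsupp hσ hN hC1 hLm hFr hFsol).congr' ?_
    filter_upwards [eventually_lt_atBot 0] with x hx
    rw [e x hx.ne]
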